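/- arXiv:1609.07604 — 2 statements merged into one kernel-verified Lean document; each statement's English description precedes it below -/
import Mathlib

section
/- Let G = ℤ/4ℤ, so n = 4 and d = 2+√5. Every solution of the polynomial equations for G satisfies η_g = 1 for all g, and up to gauge equivalence and the action of the automorphism group of G there are exactly two solutions. Exactly one of these two equivalence classes satisfies A_0(h,0) = δ_{h,0} − 1/(d−1) for all h; a representative of that class is given by: ε_1(3) = ε_3(1) = −1, ε_2(1) = ε_2(3) = −1, and ε_h(g) = 1 for all other pairs (h,g); η_g = 1 for all g; and A_g(h,k) = (1/(d−1)) times the (h,k) entry (rows h = 0,1,2,3, columns k = 0,1,2,3) of the matrices A_0 = [[d−2,−1,−1,−1],[−1,−1,z,−z],[−1,conj(z),−1,z],[−1,−conj(z),conj(z),−1]], A_1 = [[d−2,−1,−1,−1],[−1,−1,z,z],[−1,conj(z),1,−z],[−1,conj(z),−conj(z),1]], A_2 = [[d−2,−1,−1,−1],[−1,−1,−z,z],[−1,−conj(z),−1,−z],[−1,conj(z),−conj(z),−1]], A_3 = [[d−2,−1,−1,−1],[−1,1,−z,z],[−1,−conj(z),1,z],[−1,conj(z),conj(z),−1]], where z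 = −(1+√5)/2 + i·√((1+√5)/2). -/
open scoped BigOperators
open Complex

/-- `d = (n + √(n²+4))/2` where `n` is the cardinality of `G`. -/
noncomputable def dR (G : Type) [Fintype G] : ℝ :=
  ((Fintype.card G : ℝ) + Real.sqrt ((Fintype.card G : ℝ) ^ 2 + 4)) / 2

/-- The complex number `d`. -/
noncomputable def dC (G : Type) [Fintype G] : ℂ := ((dR G : ℝ) : ℂ)

/-- Equation (9) of the polynomial equations, at fixed parameters `g p q x y`. -/
def Eq9At {G : Type} [AddCommGroup G] [Fintype G] [DecidableEq G]
    (ε : G → G → ℂ) (η : G → ℂ) (A : G → G → G → ℂ) (g p q x y : G) : Prop :=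
  ∑ l : G, A g (x + y) l * A (g - p + x) (-x) (l + p) * A (g - q + x + y) (-y) (l + q)
    = η g * η (g + q + x) * η (g + p + q + y) *
        (starRingEnd ℂ) (η (g + p)) * (starRingEnd ℂ) (η (g + x + y)) *
        (starRingEnd ℂ) (η (g + q + x + y)) *
        ε p (g - p + x) * ε (p + x) (g - p + q + y) *
        ε q (g - q + x + y) * ε (q + y) (g - q + x) *
        A g (p + x) (q + x + y) * A (g - p) (q + y) (p + x + y)
      - (if x = (0 : G) then (1 : ℂ) else 0) * (if y = (0 : G) then (1 : ℂ) else 0) *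
        η g * η (g + p) * η (g + q) / dC G

/-- Equations (1)–(8) of the polynomial equations for `(ε, η, A)` on a finite abelian
group `G` (with `ε` taking values in `{1, −1}`). -/
structure PolyEqs1to8 {G : Type} [AddCommGroup G] [Fintype G] [DecidableEq G]
    (ε : G → G → ℂ) (η : G → ℂ) (A : G → G → G → ℂ) : Prop where
  eps_pm : ∀ h g : G, ε h g = 1 ∨ ε h g = -1
  eq1 : ∀ g h k : G, ε (h + k) g = ε h g * ε k (g + h + h)
  eq1' : ∀ h : G, ε h 0 = 1
  eq2 : ∀ g h : G, η (g + h + h) = η g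
  eq2' : ∀ g : G, η g ^ 3 = 1
  eq3 : ∀ g : G, ∑ h : G, A g h 0 = -(starRingEnd ℂ) (η g) / dC G
  eq4 : ∀ g g' k : G,
    ∑ h : G, A g (h - g) k * (starRingEnd ℂ) (A g' (h - g') k)
      = (if g = g' then (1 : ℂ) else 0)
        - (if k = (0 : G) then (1 : ℂ) else 0) * (starRingEnd ℂ) (η g) * η g' / dC G
  eq5 : ∀ g h p q : G,
    A (g + h + h) p q = ε h g * ε h (g + p) * ε h (g + q) * ε h (g + p + q) * A g p q
  eq6 : ∀ g h k : G, A g k h = (starRingEnd ℂ) (A g h k)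
  eq7a : ∀ g h k : G,
    A g h k = η g * ε (-k) (g + h) * ε (-k) (g + k) * ε (-k) (g + h + k) * A g (-k) (h - k)
  eq7b : ∀ g h k : G,
    A g h k = (starRingEnd ℂ) (η g) * ε (-h) (g + h) * ε (-h) (g + k) * ε (-h) (g + h + k) *
      A g (k - h) (-h)
  eq8a : ∀ g h k : G,
    A g h k = η g * η (g + k) * (starRingEnd ℂ) (η (g + h)) * (starRingEnd ℂ) (η (g + h + k)) *
      ε h g * ε h (g + k) * A (g + h) h k
  eq8b : ∀ g h k : G,
    A g h k = (starRingEnd ℂ) (η g) * (starRingEnd ℂ) (η (g + h)) * η (g + k) * η (g + h + k) *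
      ε k g * ε k (g + h) * A (g + k) h k

/-- A solution of the polynomial equations (1)–(9) for a finite abelian group `G`. -/
structure PolySolution {G : Type} [AddCommGroup G] [Fintype G] [DecidableEq G]
    (ε : G → G → ℂ) (η : G → ℂ) (A : G → G → G → ℂ)
    extends PolyEqs1to8 ε η A : Prop where
  eq9 : ∀ g p q x y : G, Eq9At ε η A g p q x y

/-- Equivalence of solutions under a gauge transformation combined with a group
automorphism. -/
def EquivSol {G : Type} [AddCommGroup G] [Fintype G] [DecidableEq G]
    (ε : G → G → ℂ) (η : G → ℂ) (A : G → G → G → ℂ)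
    (ε' : G → G → ℂ) (η' : G → ℂ) (A' : G → G → G → ℂ) : Prop :=
  ∃ (δ : G → ℂ) (θ : G ≃+ G),
    δ 0 = 1 ∧ (∀ g : G, δ g = 1 ∨ δ g = -1) ∧
    (∀ h g : G, ε' h g = δ g * δ (g + h + h) * ε (θ h) (θ g)) ∧
    (∀ g : G, η' g = η (θ g)) ∧
    (∀ g h k : G, A' g h k = δ g * δ (g + h) * δ (g + k) * δ (g + h + k) *
      A (θ g) (θ h) (θ k))

/-- The index of an element of `ℤ/4ℤ` as an element of `Fin 4`. -/
def idx4 : ZMod 4 → Fin 4 := fun g => ⟨g.val, g.val_lt⟩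

/-- `z = −(1+√5)/2 + i·√((1+√5)/2)`. -/
noncomputable def zZ4 : ℂ :=
  -(((1 + Real.sqrt 5) / 2 : ℝ) : ℂ) + Complex.I * ((Real.sqrt ((1 + Real.sqrt 5) / 2) : ℝ) : ℂ)

/-- The matrices `A_0, A_1, A_2, A_3` (rows `h`, columns `k`) of the explicit solution for
`G = ℤ/4ℤ`, before multiplication by `1/(d−1)`. -/
noncomputable def AmatZ4 : Fin 4 → Fin 4 → Fin 4 → ℂ :=
  ![![![dC (ZMod 4) - 2, -1, -1, -1],
     ![-1, -1, zZ4, -zZ4],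
     ![-1, star zZ4, -1, zZ4],
     ![-1, -star zZ4, star zZ4, -1]],
    ![![dC (ZMod 4) - 2, -1, -1, -1],
     ![-1, -1, zZ4, zZ4],
     ![-1, star zZ4, 1, -zZ4],
     ![-1, star zZ4, -star zZ4, 1]],
    ![![dC (ZMod 4) - 2, -1, -1, -1],
     ![-1, -1, -zZ4, zZ4],
     ![-1, -star zZ4, -1, -zZ4],
     ![-1, star zZ4, -star zZ4, -1]],
    ![![dC (ZMod 4) - 2, -1, -1, -1],
     ![-1, 1, -zZ4, zZ4],
     ![-1, -star zZ4, 1, zZ4],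
     ![-1, star zZ4, star zZ4, -1]]]

/-- The explicit `A` of the distinguished solution for `G = ℤ/4ℤ`. -/
noncomputable def AZ4 : ZMod 4 → ZMod 4 → ZMod 4 → ℂ := fun g h k =>
  (1 / (dC (ZMod 4) - 1)) * AmatZ4 (idx4 g) (idx4 h) (idx4 k)

/-- The explicit `ε` of the distinguished solution for `G = ℤ/4ℤ`:
`ε_1(3) = ε_3(1) = ε_2(1) = ε_2(3) = −1` and `ε_h(g) = 1` otherwise. -/
def epsZ4 : ZMod 4 → ZMod 4 → ℂ := fun h g =>
  if (h = 1 ∧ g = 3) ∨ (h = 3 ∧ g = 1) ∨ (h = 2 ∧ g = 1) ∨ (h = 2 ∧ g = 3) then -1 else 1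

theorem z4 : (0 : ZMod 4) + 0 = 0 ∧ (0 : ZMod 4) + 1 = 1 ∧ (0 : ZMod 4) + 2 = 2 ∧ (0 : ZMod 4) + 3 = 3 ∧
  (1 : ZMod 4) + 0 = 1 ∧ (1 : ZMod 4) + 1 = 2 ∧ (1 : ZMod 4) + 2 = 3 ∧ (1 : ZMod 4) + 3 = 0 ∧
  (2 : ZMod 4) + 0 = 2 ∧ (2 : ZMod 4) + 1 = 3 ∧ (2 : ZMod 4) + 2 = 0 ∧ (2 : ZMod 4) + 3 = 1 ∧
  (3 : ZMod 4) + 0 = 3 ∧ (3 : ZMod 4) + 1 = 0 ∧ (3 : ZMod 4) + 2 = 1 ∧ (3 : ZMod 4) + 3 = 2 ∧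
  (0 : ZMod 4) - 0 = 0 ∧ (0 : ZMod 4) - 1 = 3 ∧ (0 : ZMod 4) - 2 = 2 ∧ (0 : ZMod 4) - 3 = 1 ∧
  (1 : ZMod 4) - 0 = 1 ∧ (1 : ZMod 4) - 1 = 0 ∧ (1 : ZMod 4) - 2 = 3 ∧ (1 : ZMod 4) - 3 = 2 ∧
  (2 : ZMod 4) - 0 = 2 ∧ (2 : ZMod 4) - 1 = 1 ∧ (2 : ZMod 4) - 2 = 0 ∧ (2 : ZMod 4) - 3 = 3 ∧
  (3 : ZMod 4) - 0 = 3 ∧ (3 : ZMod 4) - 1 = 2 ∧ (3 : ZMod 4) - 2 = 1 ∧ (3 : ZMod 4) - 3 = 0 ∧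
  -(0 : ZMod 4) = 0 ∧ -(1 : ZMod 4) = 3 ∧ -(2 : ZMod 4) = 2 ∧ -(3 : ZMod 4) = 1 := by decide

set_option linter.unusedSimpArgs false

theorem z4_forall {P : ZMod 4 → Prop} (h0 : P 0) (h1 : P 1) (h2 : P 2) (h3 : P 3) : ∀ g, P g :=
  fun g => by
    have : ∀ g : ZMod 4, g = 0 ∨ g = 1 ∨ g = 2 ∨ g = 3 := by decide
    rcases this g with rfl | rfl | rfl | rfl <;> assumption

theorem z4_forall3 {P : ZMod 4 → ZMod 4 → ZMod 4 → Prop}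
    (h0 : ∀ k, P 0 0 k) (h1 : ∀ k, P 0 1 k) (h2 : ∀ k, P 0 2 k) (h3 : ∀ k, P 0 3 k)
    (i0 : ∀ k, P 1 0 k) (i1 : ∀ k, P 1 1 k) (i2 : ∀ k, P 1 2 k) (i3 : ∀ k, P 1 3 k)
    (j0 : ∀ k, P 2 0 k) (j1 : ∀ k, P 2 1 k) (j2 : ∀ k, P 2 2 k) (j3 : ∀ k, P 2 3 k)
    (k0 : ∀ k, P 3 0 k) (k1 : ∀ k, P 3 1 k) (k2 : ∀ k, P 3 2 k) (k3 : ∀ k, P 3 3 k) :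
    ∀ g h k, P g h k :=
  z4_forall (z4_forall h0 h1 h2 h3) (z4_forall i0 i1 i2 i3) (z4_forall j0 j1 j2 j3)
    (z4_forall k0 k1 k2 k3)

theorem idx4s : idx4 0 = 0 ∧ idx4 1 = 1 ∧ idx4 2 = 2 ∧ idx4 3 = 3 := by decide

theorem sum4 (f : ZMod 4 → ℂ) : ∑ h : ZMod 4, f h = f 0 + f 1 + f 2 + f 3 := Fin.sum_univ_four f

theorem dR4 : dR (ZMod 4) = 2 + Real.sqrt 5 := by
  have : (Fintype.card (ZMod 4) : ℝ) = 4 := by rw [ZMod.card]; norm_num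
  unfold dR
  rw [this, show ((4:ℝ) ^ 2 + 4) = 2 ^ 2 * 5 by norm_num, Real.sqrt_mul (by norm_num),
    Real.sqrt_sq (by norm_num)]
  ring

theorem w_sq : Real.sqrt 5 * Real.sqrt 5 = 5 := Real.mul_self_sqrt (by norm_num)

theorem w_lo : (2.236 : ℝ) < Real.sqrt 5 := Real.lt_sqrt_of_sq_lt (by norm_num)

theorem w_hi : Real.sqrt 5 < (2.237 : ℝ) := by
  rw [Real.sqrt_lt' (by norm_num)]; norm_num

theorem dC4 : dC (ZMod 4) = 2 + (Real.sqrt 5 : ℂ) := by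
  unfold dC; rw [dR4]; push_cast; rfl

theorem wC_sq : (Real.sqrt 5 : ℂ) * (Real.sqrt 5 : ℂ) = 5 := by
  exact_mod_cast congrArg (fun x : ℝ => (x : ℂ)) w_sq

theorem dC_ne : dC (ZMod 4) ≠ 0 := by
  unfold dC
  rw [dR4]
  have := w_lo
  exact_mod_cast (by linarith : (0:ℝ) < 2 + Real.sqrt 5).ne'

theorem inv_dC : 1 / dC (ZMod 4) = ((Real.sqrt 5 - 2 : ℝ) : ℂ) := by
  rw [div_eq_iff dC_ne, dC4]; push_cast; linear_combination -wC_sq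

theorem div_dC (x : ℂ) : x / dC (ZMod 4) = x * ((Real.sqrt 5 - 2 : ℝ) : ℂ) := by
  rw [← inv_dC]; ring

theorem eps_zero {G : Type} [AddCommGroup G] [Fintype G] [DecidableEq G]
    {ε : G → G → ℂ} {η : G → ℂ} {A : G → G → G → ℂ} (H : PolyEqs1to8 ε η A) (g : G) :
    ε 0 g = 1 := by
  have h := H.eq1 g 0 0
  simp only [add_zero] at h
  rcases H.eps_pm 0 g with h1 | h1
  · exact h1
  · rw [h1] at h; norm_num at h

theorem normSq_pm {x : ℂ} (h : x = 1 ∨ x = -1) : normSq x = 1 := by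
  rcases h with rfl | rfl <;> simp

theorem normSq_cube {x : ℂ} (h : x ^ 3 = 1) : normSq x = 1 := by
  have h2 : normSq x ^ 3 = 1 := by rw [← map_pow, h, map_one]
  have h3 : (normSq x - 1) * (normSq x ^ 2 + normSq x + 1) = 0 := by linear_combination h2
  rcases mul_eq_zero.1 h3 with h4 | h4
  · linarith
  · nlinarith [normSq_nonneg x]

theorem eta_contra (w y1 y2 y3 : ℝ) (hw : w * w = 5) (h1 : 2.236 < w)
    (e1 : y1 + y2 + y3 = -(w - 2)) (e2 : 3 * (y2 * y2) = 1 - (w - 2))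
    (e3 : y1 * y1 + y3 * y3 = 2 * (y2 * y2)) (e4 : 2 * (y1 * y3) = -(w - 2)) : False := by
  have e5 : (w - 2 + y2) * (w - 2 + y2) + (w - 2) = 2 * (y2 * y2) := by
    have : w - 2 + y2 = -(y1 + y3) := by linarith
    rw [this]; linear_combination e3 + e4
  have e6 : 2 * (w - 2) * y2 = (1 - (w - 2)) / 3 - (w - 2) * (w - 2) - (w - 2) := by
    linear_combination e5 + e2 / 3
  have e7 : (2 * (w - 2) * y2) * (2 * (w - 2) * y2) =
    4 * ((w - 2) * (w - 2)) * (1 - (w - 2)) / 3 := by linear_combination 4 * ((w-2)*(w-2)) / 3 * e2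
  rw [e6] at e7
  have e8 : (w - 2) * (w - 2) = 9 - 4 * w := by linear_combination hw
  rw [e8] at e7
  nlinarith

theorem eta_one {ε : ZMod 4 → ZMod 4 → ℂ} {η : ZMod 4 → ℂ} {A : ZMod 4 → ZMod 4 → ZMod 4 → ℂ}
    (H : PolyEqs1to8 ε η A) (g : ZMod 4) : η g = 1 := by
  by_contra hne
  have e0 := eps_zero H
  have hη := normSq_cube (H.eq2' g)
  have hηc : (starRingEnd ℂ) (η g) * η g = 1 := by
    rw [← Complex.normSq_eq_conj_mul_self, hη]; simp
  have X0 : A g 0 0 = 0 := by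
    have h := H.eq7a g 0 0
    simp only [neg_zero, e0, add_zero, sub_zero, mul_one] at h
    have : (1 - η g) * A g 0 0 = 0 := by linear_combination h
    rcases mul_eq_zero.1 this with h | h
    · exact absurd (by linear_combination -h) hne
    · exact h
  have N6 : ∀ h k, normSq (A g k h) = normSq (A g h k) := fun h k => by
    rw [H.eq6 g h k, normSq_conj]
  have N7 : ∀ h k, normSq (A g h k) = normSq (A g (-k) (h - k)) := fun h k => by
    conv_lhs => rw [H.eq7a g h k]
    simp only [normSq_mul, normSq_pm (H.eps_pm _ _), hη, one_mul]
  have S4 : ∀ k, normSq (A g 0 k) + normSq (A g 1 k) + normSq (A g 2 k) + normSq (A g 3 k)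
      = 1 - (if k = 0 then (1:ℝ) else 0) * (Real.sqrt 5 - 2) := fun k => by
    have h := H.eq4 g g k
    rw [← Equiv.sum_comp (Equiv.addRight g)] at h
    simp only [Equiv.coe_addRight, add_sub_cancel_right, if_true, div_dC, sum4, mul_conj] at h
    rw [mul_assoc (if k = 0 then (1:ℂ) else 0), hηc] at h
    apply Complex.ofReal_injective
    push_cast
    rw [h]
    split_ifs <;> push_cast <;> ring
  obtain ⟨y, hy⟩ : ∃ y : ZMod 4 → ℝ, ∀ h, η g * A g h 0 = (y h : ℂ) := by
    refine ⟨fun h => (η g * A g h 0).re, fun h => ?_⟩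
    symm
    apply Complex.conj_eq_iff_re.1
    have h1 := H.eq6 g h 0
    have h2 := H.eq7a g h 0
    simp only [neg_zero, e0, sub_zero, mul_one] at h2
    rw [map_mul, ← h1, h2]
    have h3 := H.eq2' g
    linear_combination (A g 0 h) * (-(starRingEnd ℂ) (η g) * h3 + η g ^ 2 * hηc)
  have P : ∀ h k, A g h 0 * (starRingEnd ℂ) (A g k 0) = ((y h * y k : ℝ) : ℂ) := fun h k => by
    have h1 : (starRingEnd ℂ) (η g * A g k 0) = (y k : ℂ) := by rw [hy, conj_ofReal]
    rw [map_mul] at h1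
    push_cast
    rw [← h1, ← hy]
    linear_combination -(A g h 0 * (starRingEnd ℂ) (A g k 0)) * hηc
  have hN : ∀ h, normSq (A g h 0) = y h * y h := fun h => by
    apply Complex.ofReal_injective
    rw [← P, mul_conj]
  have y0 : y 0 = 0 := by
    have := hy 0
    rw [X0, mul_zero] at this
    exact_mod_cast this.symm
  have C : 2 * (y 1 * y 3) = -(Real.sqrt 5 - 2) := by
    have h := H.eq4 g (g + 1 + 1) 0
    rw [← Equiv.sum_comp (Equiv.addRight g)] at h
    have h5 : ∀ p, A (g + 1 + 1) p 0 = A g p 0 := fun p => by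
      have h6 := H.eq5 g 1 p 0
      rcases H.eps_pm 1 g with h7 | h7 <;> rcases H.eps_pm 1 (g + p) with h8 | h8 <;>
        simpa [h7, h8] using h6
    have h9 : g ≠ g + 1 + 1 := (by decide : ∀ g : ZMod 4, g ≠ g + 1 + 1) g
    have h10 : ∀ h : ZMod 4, h + g - (g + 1 + 1) = h + 2 :=
      (by decide : ∀ g h : ZMod 4, h + g - (g + 1 + 1) = h + 2) g
    simp only [Equiv.coe_addRight, add_sub_cancel_right, h10, h5, H.eq2, if_neg h9, div_dC, sum4,
      z4, P, if_true] at h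
    rw [mul_assoc (1:ℂ), hηc] at h
    norm_cast at h
    rw [y0] at h
    push_cast at h
    linarith
  have h3 : y 1 + y 2 + y 3 = -(Real.sqrt 5 - 2) := by
    have h := H.eq3 g
    rw [sum4, div_dC] at h
    apply Complex.ofReal_injective
    push_cast
    rw [← hy, ← hy, ← hy]
    push_cast at h
    linear_combination η g * h - η g * X0 - ((Real.sqrt 5 : ℂ) - 2) * hηc
  have k0 := S4 0
  have k1 := S4 1
  have k2 := S4 2
  have n01 := N7 1 0
  have n02 := N7 0 1
  have n03 := N7 2 0
  have n04 := N7 0 2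
  have n05 := N7 3 0
  have n06 := N7 0 3
  have n07 := N7 1 2
  have n08 := N7 2 3
  have n09 := N6 1 2
  have n10 := N6 1 3
  have n11 := N6 2 3
  have n1 : (1 : ZMod 4) ≠ 0 := by decide
  have n2 : (2 : ZMod 4) ≠ 0 := by decide
  simp only [z4, if_true, if_neg n1, if_neg n2] at *
  refine eta_contra (Real.sqrt 5) (y 1) (y 2) (y 3) w_sq w_lo h3 ?_ ?_ C <;>
    simp only [hN, y0] at * <;> linarith

/-- The general shape of `A` determined by equations (5)-(8). -/
def Tab {R : Type} (f : R → R) (t0 t1 t2 t3 s0 s2 u v : R) : Fin 4 → Fin 4 → Fin 4 → R :=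
  ![
    ![![t0, t1, t2, t3],
      ![t1, t3, u, f u],
      ![t2, v, t2, u],
      ![t3, f v, v, t1]],
    ![![s0, t1, s2, t3],
      ![t1, t3, u, u],
      ![s2, v, f s2, f u],
      ![t3, v, f v, f t1]],
    ![![t0, t1, t2, t3],
      ![t1, t3, f u, u],
      ![t2, f v, t2, f u],
      ![t3, v, f v, t1]],
    ![![s0, t1, s2, t3],
      ![t1, f t3, f u, u],
      ![s2, f v, f s2, u],
      ![t3, v, v, t1]]]

/-- The gg function. -/
def gg (a : ℂ) : ZMod 4 → ℂ := fun g => if g = 3 then a else 1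

theorem ggs (a : ℂ) : gg a 0 = 1 ∧ gg a 1 = 1 ∧ gg a 2 = 1 ∧ gg a 3 = a :=
  ⟨if_neg (by decide), if_neg (by decide), if_neg (by decide), if_pos rfl⟩

/-- Result of gauging by `gg a`. -/
def gau (a : ℂ) (A : ZMod 4 → ZMod 4 → ZMod 4 → ℂ) (g h k : ZMod 4) : ℂ :=
  gg a g * gg a (g + h) * gg a (g + k) * gg a (g + h + k) * A g h k

theorem table {ε : ZMod 4 → ZMod 4 → ℂ} {A : ZMod 4 → ZMod 4 → ZMod 4 → ℂ}
    (H : PolyEqs1to8 ε (fun _ => 1) A) {a e t0 t1 t2 t3 s0 s2 u : ℂ}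
    (ha : a = 1 ∨ a = -1) (he : e = 1 ∨ e = -1)
    (E : (∀ g, ε 0 g = 1) ∧ (∀ h, ε h 0 = 1) ∧ (∀ h, ε h 2 = 1) ∧ ε 1 1 = a ∧ ε 1 3 = a * e ∧
      ε 2 1 = e ∧ ε 2 3 = e ∧ ε 3 1 = a * e ∧ ε 3 3 = a)
    (h000 : A 0 0 0 = t0) (h001 : A 0 0 1 = t1) (h002 : A 0 0 2 = t2) (h003 : A 0 0 3 = t3)
    (h100 : A 1 0 0 = s0) (h102 : A 1 0 2 = s2) (h012 : A 0 1 2 = a * u)   :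
    ∀ g h k : ZMod 4, A g h k = gau a (fun g h k => Tab (fun x => e * x) t0 t1 t2 t3 s0 s2 u ((starRingEnd ℂ) u)
      (idx4 g) (idx4 h) (idx4 k)) g h k := by
  have c1 : (starRingEnd ℂ) t1 = t1 := by
    have h1 := H.eq6 0 0 1
    have h2 := H.eq7a 0 1 0
    simp only [z4, E, one_mul, h001] at h1 h2
    rw [← h1, h2]
  have c2 : (starRingEnd ℂ) t2 = t2 := by
    have h1 := H.eq6 0 0 2
    have h2 := H.eq7a 0 2 0
    simp only [z4, E, one_mul, h002] at h1 h2
    rw [← h1, h2]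
  have c3 : (starRingEnd ℂ) t3 = t3 := by
    have h1 := H.eq6 0 0 3
    have h2 := H.eq7a 0 3 0
    simp only [z4, E, one_mul, h003] at h1 h2
    rw [← h1, h2]
  have c4 : (starRingEnd ℂ) s2 = s2 := by
    have h1 := H.eq6 1 0 2
    have h2 := H.eq7a 1 2 0
    simp only [z4, E, one_mul, h102] at h1 h2
    rw [← h1, h2]
  have h200 : A 2 0 0 = t0 := (H.eq5 0 1 0 0).trans (by
    simp only [z4, E, h000]
    rcases ha with rfl | rfl <;> rcases he with rfl | rfl <;> simp [c1, c2, c3, c4])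
  have h010 : A 0 1 0 = t1 := (H.eq6 0 0 1).trans (by
    simp only [z4, E, h001]
    rcases ha with rfl | rfl <;> rcases he with rfl | rfl <;> simp [c1, c2, c3, c4])
  have h201 : A 2 0 1 = t1 := (H.eq5 0 1 0 1).trans (by
    simp only [z4, E, h001]
    rcases ha with rfl | rfl <;> rcases he with rfl | rfl <;> simp [c1, c2, c3, c4])
  have h033 : A 0 3 3 = t1 := (H.eq7b 0 3 3).trans (by
    simp only [z4, E, h001]
    rcases ha with rfl | rfl <;> rcases he with rfl | rfl <;> simp [c1, c2, c3, c4])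
  have h301 : A 3 0 1 = t1 := (H.eq8b 3 0 1).trans (by
    simp only [z4, E, h001]
    rcases ha with rfl | rfl <;> rcases he with rfl | rfl <;> simp [c1, c2, c3, c4])
  have h020 : A 0 2 0 = t2 := (H.eq6 0 0 2).trans (by
    simp only [z4, E, h002]
    rcases ha with rfl | rfl <;> rcases he with rfl | rfl <;> simp [c1, c2, c3, c4])
  have h202 : A 2 0 2 = t2 := (H.eq5 0 1 0 2).trans (by
    simp only [z4, E, h002]
    rcases ha with rfl | rfl <;> rcases he with rfl | rfl <;> simp [c1, c2, c3, c4])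
  have h022 : A 0 2 2 = t2 := (H.eq7b 0 2 2).trans (by
    simp only [z4, E, h002]
    rcases ha with rfl | rfl <;> rcases he with rfl | rfl <;> simp [c1, c2, c3, c4])
  have h030 : A 0 3 0 = t3 := (H.eq6 0 0 3).trans (by
    simp only [z4, E, h003]
    rcases ha with rfl | rfl <;> rcases he with rfl | rfl <;> simp [c1, c2, c3, c4])
  have h203 : A 2 0 3 = t3 := (H.eq5 0 1 0 3).trans (by
    simp only [z4, E, h003]
    rcases ha with rfl | rfl <;> rcases he with rfl | rfl <;> simp [c1, c2, c3, c4])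
  have h011 : A 0 1 1 = t3 := (H.eq7b 0 1 1).trans (by
    simp only [z4, E, h003]
    rcases ha with rfl | rfl <;> rcases he with rfl | rfl <;> simp [c1, c2, c3, c4])
  have h103 : A 1 0 3 = t3 := (H.eq8b 1 0 3).trans (by
    simp only [z4, E, h003]
    rcases ha with rfl | rfl <;> rcases he with rfl | rfl <;> simp [c1, c2, c3, c4])
  have h300 : A 3 0 0 = s0 := (H.eq5 1 1 0 0).trans (by
    simp only [z4, E, h100]
    rcases ha with rfl | rfl <;> rcases he with rfl | rfl <;> simp [c1, c2, c3, c4])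
  have h120 : A 1 2 0 = s2 := (H.eq6 1 0 2).trans (by
    simp only [z4, E, h102]
    rcases ha with rfl | rfl <;> rcases he with rfl | rfl <;> simp [c1, c2, c3, c4])
  have h302 : A 3 0 2 = s2 := (H.eq5 1 1 0 2).trans (by
    simp only [z4, E, h102]
    rcases ha with rfl | rfl <;> rcases he with rfl | rfl <;> simp [c1, c2, c3, c4])
  have h122 : A 1 2 2 = e * s2 := (H.eq7b 1 2 2).trans (by
    simp only [z4, E, h102]
    rcases ha with rfl | rfl <;> rcases he with rfl | rfl <;> simp [c1, c2, c3, c4])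
  have h021 : A 0 2 1 = a * (starRingEnd ℂ) u := (H.eq6 0 1 2).trans (by
    simp only [z4, E, h012]
    rcases ha with rfl | rfl <;> rcases he with rfl | rfl <;> simp [c1, c2, c3, c4])
  have h212 : A 2 1 2 = a * (e * u) := (H.eq5 0 1 1 2).trans (by
    simp only [z4, E, h012]
    rcases ha with rfl | rfl <;> rcases he with rfl | rfl <;> simp [c1, c2, c3, c4])
  have h013 : A 0 1 3 = a * (e * u) := (H.eq7a 0 1 3).trans (by
    simp only [z4, E, h012]
    rcases ha with rfl | rfl <;> rcases he with rfl | rfl <;> simp [c1, c2, c3, c4])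
  have h023 : A 0 2 3 = a * u := (H.eq7b 0 2 3).trans (by
    simp only [z4, E, h012]
    rcases ha with rfl | rfl <;> rcases he with rfl | rfl <;> simp [c1, c2, c3, c4])
  have h312 : A 3 1 2 = a * (e * u) := (H.eq8a 3 1 2).trans (by
    simp only [z4, E, h012]
    rcases ha with rfl | rfl <;> rcases he with rfl | rfl <;> simp [c1, c2, c3, c4])
  have h210 : A 2 1 0 = t1 := (H.eq5 0 1 1 0).trans (by
    simp only [z4, E, h010]
    rcases ha with rfl | rfl <;> rcases he with rfl | rfl <;> simp [c1, c2, c3, c4])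
  have h310 : A 3 1 0 = t1 := (H.eq8a 3 1 0).trans (by
    simp only [z4, E, h010]
    rcases ha with rfl | rfl <;> rcases he with rfl | rfl <;> simp [c1, c2, c3, c4])
  have h101 : A 1 0 1 = t1 := (H.eq8b 1 0 1).trans (by
    simp only [z4, E, h201]
    rcases ha with rfl | rfl <;> rcases he with rfl | rfl <;> simp [c1, c2, c3, c4])
  have h233 : A 2 3 3 = t1 := (H.eq7b 2 3 3).trans (by
    simp only [z4, E, h201]
    rcases ha with rfl | rfl <;> rcases he with rfl | rfl <;> simp [c1, c2, c3, c4])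
  have h133 : A 1 3 3 = a * (e * t1) := (H.eq8a 1 3 3).trans (by
    simp only [z4, E, h033]
    rcases ha with rfl | rfl <;> rcases he with rfl | rfl <;> simp [c1, c2, c3, c4])
  have h333 : A 3 3 3 = a * t1 := (H.eq7b 3 3 3).trans (by
    simp only [z4, E, h301]
    rcases ha with rfl | rfl <;> rcases he with rfl | rfl <;> simp [c1, c2, c3, c4])
  have h220 : A 2 2 0 = t2 := (H.eq5 0 1 2 0).trans (by
    simp only [z4, E, h020]
    rcases ha with rfl | rfl <;> rcases he with rfl | rfl <;> simp [c1, c2, c3, c4])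
  have h222 : A 2 2 2 = t2 := (H.eq7b 2 2 2).trans (by
    simp only [z4, E, h202]
    rcases ha with rfl | rfl <;> rcases he with rfl | rfl <;> simp [c1, c2, c3, c4])
  have h230 : A 2 3 0 = t3 := (H.eq5 0 1 3 0).trans (by
    simp only [z4, E, h030]
    rcases ha with rfl | rfl <;> rcases he with rfl | rfl <;> simp [c1, c2, c3, c4])
  have h130 : A 1 3 0 = t3 := (H.eq8a 1 3 0).trans (by
    simp only [z4, E, h030]
    rcases ha with rfl | rfl <;> rcases he with rfl | rfl <;> simp [c1, c2, c3, c4])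
  have h211 : A 2 1 1 = t3 := (H.eq7b 2 1 1).trans (by
    simp only [z4, E, h203]
    rcases ha with rfl | rfl <;> rcases he with rfl | rfl <;> simp [c1, c2, c3, c4])
  have h303 : A 3 0 3 = t3 := (H.eq8b 3 0 3).trans (by
    simp only [z4, E, h203]
    rcases ha with rfl | rfl <;> rcases he with rfl | rfl <;> simp [c1, c2, c3, c4])
  have h311 : A 3 1 1 = a * (e * t3) := (H.eq8a 3 1 1).trans (by
    simp only [z4, E, h011]
    rcases ha with rfl | rfl <;> rcases he with rfl | rfl <;> simp [c1, c2, c3, c4])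
  have h111 : A 1 1 1 = a * t3 := (H.eq7b 1 1 1).trans (by
    simp only [z4, E, h103]
    rcases ha with rfl | rfl <;> rcases he with rfl | rfl <;> simp [c1, c2, c3, c4])
  have h320 : A 3 2 0 = s2 := (H.eq5 1 1 2 0).trans (by
    simp only [z4, E, h120]
    rcases ha with rfl | rfl <;> rcases he with rfl | rfl <;> simp [c1, c2, c3, c4])
  have h322 : A 3 2 2 = e * s2 := (H.eq7b 3 2 2).trans (by
    simp only [z4, E, h302]
    rcases ha with rfl | rfl <;> rcases he with rfl | rfl <;> simp [c1, c2, c3, c4])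
  have h221 : A 2 2 1 = a * (e * (starRingEnd ℂ) u) := (H.eq5 0 1 2 1).trans (by
    simp only [z4, E, h021]
    rcases ha with rfl | rfl <;> rcases he with rfl | rfl <;> simp [c1, c2, c3, c4])
  have h031 : A 0 3 1 = a * (e * (starRingEnd ℂ) u) := (H.eq7b 0 3 1).trans (by
    simp only [z4, E, h021]
    rcases ha with rfl | rfl <;> rcases he with rfl | rfl <;> simp [c1, c2, c3, c4])
  have h032 : A 0 3 2 = a * (starRingEnd ℂ) u := (H.eq7a 0 3 2).trans (by
    simp only [z4, E, h021]
    rcases ha with rfl | rfl <;> rcases he with rfl | rfl <;> simp [c1, c2, c3, c4])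
  have h321 : A 3 2 1 = a * (e * (starRingEnd ℂ) u) := (H.eq8b 3 2 1).trans (by
    simp only [z4, E, h021]
    rcases ha with rfl | rfl <;> rcases he with rfl | rfl <;> simp [c1, c2, c3, c4])
  have h112 : A 1 1 2 = a * u := (H.eq8a 1 1 2).trans (by
    simp only [z4, E, h212]
    rcases ha with rfl | rfl <;> rcases he with rfl | rfl <;> simp [c1, c2, c3, c4])
  have h213 : A 2 1 3 = a * u := (H.eq7a 2 1 3).trans (by
    simp only [z4, E, h212]
    rcases ha with rfl | rfl <;> rcases he with rfl | rfl <;> simp [c1, c2, c3, c4])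
  have h223 : A 2 2 3 = a * (e * u) := (H.eq7b 2 2 3).trans (by
    simp only [z4, E, h212]
    rcases ha with rfl | rfl <;> rcases he with rfl | rfl <;> simp [c1, c2, c3, c4])
  have h113 : A 1 1 3 = u := (H.eq8b 1 1 3).trans (by
    simp only [z4, E, h013]
    rcases ha with rfl | rfl <;> rcases he with rfl | rfl <;> simp [c1, c2, c3, c4])
  have h313 : A 3 1 3 = u := (H.eq8a 3 1 3).trans (by
    simp only [z4, E, h013]
    rcases ha with rfl | rfl <;> rcases he with rfl | rfl <;> simp [c1, c2, c3, c4])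
  have h123 : A 1 2 3 = a * (e * u) := (H.eq8b 1 2 3).trans (by
    simp only [z4, E, h023]
    rcases ha with rfl | rfl <;> rcases he with rfl | rfl <;> simp [c1, c2, c3, c4])
  have h323 : A 3 2 3 = a * u := (H.eq7b 3 2 3).trans (by
    simp only [z4, E, h312]
    rcases ha with rfl | rfl <;> rcases he with rfl | rfl <;> simp [c1, c2, c3, c4])
  have h110 : A 1 1 0 = t1 := (H.eq8a 1 1 0).trans (by
    simp only [z4, E, h210]
    rcases ha with rfl | rfl <;> rcases he with rfl | rfl <;> simp [c1, c2, c3, c4])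
  have h330 : A 3 3 0 = t3 := (H.eq8a 3 3 0).trans (by
    simp only [z4, E, h230]
    rcases ha with rfl | rfl <;> rcases he with rfl | rfl <;> simp [c1, c2, c3, c4])
  have h121 : A 1 2 1 = a * (starRingEnd ℂ) u := (H.eq8b 1 2 1).trans (by
    simp only [z4, E, h221]
    rcases ha with rfl | rfl <;> rcases he with rfl | rfl <;> simp [c1, c2, c3, c4])
  have h231 : A 2 3 1 = a * (starRingEnd ℂ) u := (H.eq7b 2 3 1).trans (by
    simp only [z4, E, h221]
    rcases ha with rfl | rfl <;> rcases he with rfl | rfl <;> simp [c1, c2, c3, c4])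
  have h232 : A 2 3 2 = a * (e * (starRingEnd ℂ) u) := (H.eq7a 2 3 2).trans (by
    simp only [z4, E, h221]
    rcases ha with rfl | rfl <;> rcases he with rfl | rfl <;> simp [c1, c2, c3, c4])
  have h131 : A 1 3 1 = (starRingEnd ℂ) u := (H.eq8a 1 3 1).trans (by
    simp only [z4, E, h031]
    rcases ha with rfl | rfl <;> rcases he with rfl | rfl <;> simp [c1, c2, c3, c4])
  have h331 : A 3 3 1 = (starRingEnd ℂ) u := (H.eq8b 3 3 1).trans (by
    simp only [z4, E, h031]
    rcases ha with rfl | rfl <;> rcases he with rfl | rfl <;> simp [c1, c2, c3, c4])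
  have h132 : A 1 3 2 = a * (e * (starRingEnd ℂ) u) := (H.eq8a 1 3 2).trans (by
    simp only [z4, E, h032]
    rcases ha with rfl | rfl <;> rcases he with rfl | rfl <;> simp [c1, c2, c3, c4])
  have h332 : A 3 3 2 = a * (starRingEnd ℂ) u := (H.eq7a 3 3 2).trans (by
    simp only [z4, E, h321]
    rcases ha with rfl | rfl <;> rcases he with rfl | rfl <;> simp [c1, c2, c3, c4])
  have aa : a * a = 1 := by rcases ha with rfl | rfl <;> simp
  have aax : ∀ x, a * (a * x) = x := fun x => by rw [← mul_assoc, aa, one_mul]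
  refine z4_forall3 ?_ ?_ ?_ ?_ ?_ ?_ ?_ ?_ ?_ ?_ ?_ ?_ ?_ ?_ ?_ ?_ <;>
    refine z4_forall ?_ ?_ ?_ ?_ <;>
    (simp only [gau, z4, ggs, idx4s, Tab, Matrix.cons_val, one_mul, mul_one, mul_assoc, aa, aax]
     assumption)

theorem core_pos (x1 x2 x3 p q : ℝ)
    (a1 : 2 * (p * p + q * q) + 2 * (x2 * x2) = 1)
    (a2 : 2 * (p * p - q * q) + 2 * (x2 * x2) = 0)
    (a3 : 2 * (p * p + q * q) + x1 * x1 + x3 * x3 = 1)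
    (a4 : p * p + q * q + (x1 + x3) * p + x1 * x3 = 0)
    (a5 : (x1 - x3) * q = 0) (a6 : (x1 + x3) * p = 0) : False := by
  have hq : q ≠ 0 := by rintro rfl; linarith
  have h : x1 - x3 = 0 := (mul_eq_zero.1 a5).resolve_right hq
  have h : x1 = x3 := by linarith
  subst h
  linarith

theorem core_sub (w s x1 x3 x0 x2 y0 y2 : ℝ) (e1 : x0 + s + x2 = -(w - 2))
    (e2 : y0 + s + y2 = -(w - 2)) (h : y2 * y2 = x2 * x2)
    (n0 : x0 * x0 + x1 * x1 + x2 * x2 + x3 * x3 = 1 - (w - 2))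
    (n1 : y0 * y0 + x1 * x1 + y2 * y2 + x3 * x3 = 1 - (w - 2))
    (hs : x2 * (w - 2 + s) ≠ 0) : y0 = x0 ∧ y2 = x2 := by
  have : (y2 - x2) * (y2 + x2) = 0 := by linear_combination h
  rcases mul_eq_zero.1 this with h1 | h1
  · exact ⟨by linarith, by linarith⟩
  · exfalso
    apply hs
    have h2 : y2 = -x2 := by linarith
    subst h2
    have h3 : x0 = -(w - 2) - s - x2 := by linarith
    have h4 : y0 = -(w - 2) - s + x2 := by linarith
    subst h3 h4
    linear_combination (n0 - n1) / 4

theorem core_neg (w x0 x1 x2 x3 y0 y2 p q : ℝ) (hw : w * w = 5) (hl : 2.236 < w) (hh : w < 2.237)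
    (e1 : x0 + x1 + x2 + x3 = -(w - 2)) (e2 : y0 + x1 + y2 + x3 = -(w - 2))
    (n0 : x0 * x0 + x1 * x1 + x2 * x2 + x3 * x3 = 1 - (w - 2))
    (n1 : y0 * y0 + x1 * x1 + y2 * y2 + x3 * x3 = 1 - (w - 2))
    (o : 2 * (x1 * x3 + x0 * x2) = -(w - 2))
    (a1 : 2 * (p * p + q * q) + 2 * (x2 * x2) = 1)
    (a1' : 2 * (p * p + q * q) + 2 * (y2 * y2) = 1)
    (a2 : p * p - q * q = x2 * x2)
    (a3 : 2 * (p * p + q * q) + x1 * x1 + x3 * x3 = 1)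
    (a4 : p * p + q * q - (x1 + x3) * p - x1 * x3 = 0)
    (a5 : (x1 - x3) * q = 0)
    (b1 : x1 * (2 * p + 1) * p = 0) (b2 : x3 * (2 * p + 1) * p = 0) :
    p = -1 / 2 ∧ y0 = x0 ∧ y2 = x2 ∧
    ((x1 = (1 - w) / 4 ∧ x3 = (1 - w) / 4 ∧ x2 = (1 - w) / 4 ∧ x0 = (5 - w) / 4 ∧
        q * q = (w - 1) / 8) ∨
      (q = 0 ∧ x2 = 1 / 2 ∧ x0 = (2 - w) / 2 ∧ x1 + x3 = (1 - w) / 2 ∧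
        (x1 - x3) * (x1 - x3) = (w - 1) / 2)) := by
  have hp2 : p * p = 1 / 4 := by linarith
  have hp0 : p ≠ 0 := by rintro rfl; norm_num at hp2
  have hp : p = -1 / 2 := by
    by_contra hne
    have h1 : 2 * p + 1 ≠ 0 := fun h => hne (by linarith)
    have h2 : x1 = 0 := by simpa [h1, hp0] using b1
    have h3 : x3 = 0 := by simpa [h1, hp0] using b2
    subst h2 h3
    have h4 : x2 * x2 = 0 := by linarith
    have h5 : x2 = 0 := by simpa using h4
    subst h5
    linarith
  subst hp
  have hy : y2 * y2 = x2 * x2 := by linarith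
  refine ⟨rfl, ?_⟩
  suffices hS : ((x1 = (1 - w) / 4 ∧ x3 = (1 - w) / 4 ∧ x2 = (1 - w) / 4 ∧ x0 = (5 - w) / 4 ∧
        q * q = (w - 1) / 8) ∨
      (q = 0 ∧ x2 = 1 / 2 ∧ x0 = (2 - w) / 2 ∧ x1 + x3 = (1 - w) / 2 ∧
        (x1 - x3) * (x1 - x3) = (w - 1) / 2)) by
    have := core_sub w (x1 + x3) x1 x3 x0 x2 y0 y2 (by linarith) (by linarith) hy n0 n1 (by
      rcases hS with ⟨h1, h2, h3, -⟩ | ⟨-, h1, -, h2, -⟩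
      · rw [h1, h2, h3]; intro h; linarith
      · rw [h1, h2]; intro h; linarith)
    exact ⟨this.1, this.2, hS⟩
  rcases mul_eq_zero.1 a5 with h | h
  · left
    have h : x3 = x1 := by linarith
    subst h
    have h2 : (x2 - x3) * (x2 + x3) = 0 := by linear_combination (a1 - a3) / 2
    have h3 : (x3 - (1 - w) / 4) * (x3 - (1 + w) / 4) = 0 := by
      linear_combination -a4 / 2 + a3 / 4 - hw / 16
    rcases mul_eq_zero.1 h3 with h4 | h4
    · have h4 : x3 = (1 - w) / 4 := by linarith
      subst h4
      rcases mul_eq_zero.1 h2 with h5 | h5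
      · have h5 : x2 = (1 - w) / 4 := by linarith
        subst h5
        exact ⟨rfl, rfl, rfl, by linarith, by linarith⟩
      · exfalso
        have h5 : x2 = -((1 - w) / 4) := by linarith
        subst h5
        have h6 : x0 = (7 - 3 * w) / 4 := by linarith
        subst h6
        linarith
    · exfalso
      have h4 : x3 = (1 + w) / 4 := by linarith
      subst h4
      linarith [mul_self_nonneg q]
  · right
    subst h
    have h2 : (x2 - 1 / 2) * (x2 + 1 / 2) = 0 := by linear_combination a1 / 2
    have h3 : (x1 + x3 - (1 - w) / 2) * (x1 + x3 - (1 + w) / 2) = 0 := by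
      linear_combination a3 - 2 * a4 - hw / 4
    have h4 : x1 + x3 = (1 - w) / 2 := by
      rcases mul_eq_zero.1 h3 with h | h
      · linarith
      · exfalso
        have : x1 + x3 = (1 + w) / 2 := by linarith
        have h7 : (x1 + x3) * (x1 + x3) ≤ 1 := by linarith [mul_self_nonneg (x1 - x3)]
        rw [this] at h7
        linarith
    have h5 : x2 = 1 / 2 := by
      rcases mul_eq_zero.1 h2 with h | h
      · linarith
      · exfalso
        have h5 : x2 = -1 / 2 := by linarith
        subst h5
        have h6 : x0 = (4 - w) / 2 := by linarith
        subst h6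
        linarith
    refine ⟨rfl, h5, by linarith, h4, ?_⟩
    have h6 : x3 = (1 - w) / 2 - x1 := by linarith
    subst h6
    linear_combination 4 * a4 + hw / 4

theorem eps_table {ε : ZMod 4 → ZMod 4 → ℂ} {η : ZMod 4 → ℂ} {A : ZMod 4 → ZMod 4 → ZMod 4 → ℂ}
    (H : PolyEqs1to8 ε η A) : ∃ a e : ℂ, (a = 1 ∨ a = -1) ∧ (e = 1 ∨ e = -1) ∧
    (∀ g, ε 0 g = 1) ∧ (∀ h, ε h 0 = 1) ∧ (∀ h, ε h 2 = 1) ∧ ε 1 1 = a ∧ ε 1 3 = a * e ∧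
      ε 2 1 = e ∧ ε 2 3 = e ∧ ε 3 1 = a * e ∧ ε 3 3 = a := by
  have ha := H.eps_pm 1 1
  have hb := H.eps_pm 1 3
  have h1 := H.eq1 1 1 1
  have h2 := H.eq1 3 1 1
  have h3 := H.eq1 1 2 1
  have h4 := H.eq1 3 2 1
  have h5 := fun k => H.eq1 0 1 k
  simp only [z4, H.eq1', one_mul] at h1 h2 h3 h4 h5
  refine ⟨ε 1 1, ε 1 1 * ε 1 3, ha, ?_, eps_zero H, H.eq1', fun h => (h5 h).symm, rfl, ?_, h1, ?_,
    ?_, ?_⟩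
  · rcases ha with h | h <;> rcases hb with h' | h' <;> simp [h, h']
  · rcases ha with h | h <;> simp [h]
  · rw [h2, mul_comm]
  · rw [h3, h1]; ring
  · rw [h4, h2]; rcases hb with h | h <;> simp [h]

theorem real_of {ε : ZMod 4 → ZMod 4 → ℂ} {A : ZMod 4 → ZMod 4 → ZMod 4 → ℂ}
    (H : PolyEqs1to8 ε (fun _ => 1) A) (g h : ZMod 4) : ∃ x : ℝ, A g 0 h = x := by
  have h1 := H.eq6 g 0 h
  have h2 := H.eq7a g h 0
  simp only [neg_zero, eps_zero H, sub_zero, one_mul] at h2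
  exact Complex.conj_eq_iff_real.1 (by rw [← h1, h2])

theorem classify {ε : ZMod 4 → ZMod 4 → ℂ} {A : ZMod 4 → ZMod 4 → ZMod 4 → ℂ}
    (H : PolySolution ε (fun _ => 1) A) : ∃ a : ℂ, (a = 1 ∨ a = -1) ∧
    ((∀ g, ε 0 g = 1) ∧ (∀ h, ε h 0 = 1) ∧ (∀ h, ε h 2 = 1) ∧ ε 1 1 = a ∧ ε 1 3 = -a ∧
      ε 2 1 = -1 ∧ ε 2 3 = -1 ∧ ε 3 1 = -a ∧ ε 3 3 = a) ∧
    ∃ x0 x1 x2 x3 q : ℝ, 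
      ((x1 = (1 - √5) / 4 ∧ x3 = (1 - √5) / 4 ∧ x2 = (1 - √5) / 4 ∧ x0 = (5 - √5) / 4 ∧
        q * q = (√5 - 1) / 8) ∨
      (q = 0 ∧ x2 = 1 / 2 ∧ x0 = (2 - √5) / 2 ∧ x1 + x3 = (1 - √5) / 2 ∧
        (x1 - x3) * (x1 - x3) = (√5 - 1) / 2)) ∧
      ∀ g h k, A g h k = gau a (fun g h k => Tab (fun x => -x) (x0 : ℂ) x1 x2 x3 x0 x2
        (-1 / 2 + q * I) (-1 / 2 - q * I) (idx4 g) (idx4 h) (idx4 k)) g h k := by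
  have H8 := H.toPolyEqs1to8
  obtain ⟨a, e, ha, he, E⟩ := eps_table H8
  obtain ⟨x0, h000⟩ := real_of H8 0 0
  obtain ⟨x1, h001⟩ := real_of H8 0 1
  obtain ⟨x2, h002⟩ := real_of H8 0 2
  obtain ⟨x3, h003⟩ := real_of H8 0 3
  obtain ⟨y0, h100⟩ := real_of H8 1 0
  obtain ⟨y2, h102⟩ := real_of H8 1 2
  obtain ⟨p, q, h012⟩ : ∃ p q : ℝ, A 0 1 2 = a * (p + q * I) := by
    refine ⟨(a * A 0 1 2).re, (a * A 0 1 2).im, ?_⟩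
    rw [Complex.re_add_im, ← mul_assoc]
    rcases ha with rfl | rfl <;> simp
  have T := table H8 ha he E h000 h001 h002 h003 h100 h102 h012
  have d1 : (0 : ZMod 4) ≠ 2 := by decide
  have d2 : (0 : ZMod 4) ≠ 1 := by decide
  have d3 : (2 : ZMod 4) ≠ 0 := by decide
  have d4 : (1 : ZMod 4) ≠ 0 := by decide
  have a1 := H8.eq4 0 0 2
  have a2 := H8.eq4 0 2 2
  have a3 := H8.eq4 0 0 1
  have a4 := H8.eq4 0 1 1
  have a6 := H8.eq4 0 2 1
  have a1' := H8.eq4 1 1 2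
  have n0 := H8.eq4 0 0 0
  have n1 := H8.eq4 1 1 0
  have o := H8.eq4 0 2 0
  have e1 := H8.eq3 0
  have e2 := H8.eq3 1
  have b1 := H.eq9 0 0 2 1 1
  have b2 := H.eq9 0 0 2 2 3
  unfold Eq9At at b1 b2
  simp only [sum4, div_dC, z4, T, gau, ggs, idx4s, Tab, Matrix.cons_val, map_mul, map_add, map_one,
    conj_ofReal, conj_I, E, d1, d2, d3, d4, if_true, if_false, one_mul, mul_one, zero_mul, mul_zero, sub_zero, 
    conj_conj] at a1 a2 a3 a4 a6 a1' n0 n1 o e1 e2 b1 b2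
  have key : e = -1 ∧ p = -1 / 2 ∧ y0 = x0 ∧ y2 = x2 ∧
      ((x1 = (1 - √5) / 4 ∧ x3 = (1 - √5) / 4 ∧ x2 = (1 - √5) / 4 ∧ x0 = (5 - √5) / 4 ∧
        q * q = (√5 - 1) / 8) ∨
      (q = 0 ∧ x2 = 1 / 2 ∧ x0 = (2 - √5) / 2 ∧ x1 + x3 = (1 - √5) / 2 ∧
        (x1 - x3) * (x1 - x3) = (√5 - 1) / 2)) := by
    clear T h012
    rcases he with rfl | rfl
    · exfalso
      rcases ha with rfl | rfl <;> simp [Complex.ext_iff] at a1 a2 a3 a4 a6 <;>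
      refine core_pos x1 x2 x3 p q ?_ ?_ ?_ ?_ ?_ ?_ <;>
        linarith only [a1.1, a2.1, a3.1, a4.1, a4.2, a6.1]
    · refine ⟨rfl, ?_⟩
      rcases ha with rfl | rfl <;>
      simp [Complex.ext_iff] at a1 a2 a3 a4 a1' n0 n1 o e1 e2 b1 b2 <;>
      refine core_neg (√5) x0 x1 x2 x3 y0 y2 p q w_sq w_lo w_hi ?_ ?_ ?_ ?_ ?_ ?_ ?_ ?_ ?_ ?_ ?_ ?_ ?_
      all_goals first
        | linarith only [a1.1, a1'.1, a2.1]
        | linarith only [a3.1, a4.1, a4.2]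
        | linarith only [n0, n1, o, e1, e2]
        | linarith only [b1.1, b2.1]
  obtain ⟨rfl, rfl, rfl, rfl, hS⟩ := key
  refine ⟨a, ha, by simpa using E, y0, x1, y2, x3, q, hS, ?_⟩
  intro g h k
  rw [T]
  simp only [map_add, map_mul, conj_ofReal, conj_I, neg_one_mul, mul_neg, ← sub_eq_add_neg]
  push_cast
  rfl


/-- Elements `a + b r + c r² + d r³` with integer coefficients. -/
abbrev Q4 : Type := ℤ × ℤ × ℤ × ℤ

/-- Sum. -/
def qadd (x y : Q4) : Q4 :=
  (x.1 + y.1, x.2.1 + y.2.1, x.2.2.1 + y.2.2.1, x.2.2.2 + y.2.2.2)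

/-- Integer multiple. -/
def qsm (n : ℤ) (x : Q4) : Q4 := (n * x.1, n * x.2.1, n * x.2.2.1, n * x.2.2.2)

/-- Conjugation `r ↦ t r`. -/
def qcj (t : ℤ) (x : Q4) : Q4 := (x.1, t * x.2.1, x.2.2.1, t * x.2.2.2)

/-- Product, using `r⁴ = s r² + 1`. -/
def qmul (s : ℤ) : Q4 → Q4 → Q4
  | (a0, a1, a2, a3), (b0, b1, b2, b3) =>
    (a0 * b0 + (a1 * b3 + a2 * b2 + a3 * b1) + s * (a3 * b3),
     a0 * b1 + a1 * b0 + (a2 * b3 + a3 * b2),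
     a0 * b2 + a1 * b1 + a2 * b0 + s * (a1 * b3 + a2 * b2 + a3 * b1) + (s * s + 1) * (a3 * b3),
     a0 * b3 + a1 * b2 + a2 * b1 + a3 * b0 + s * (a2 * b3 + a3 * b2))

/-- Evaluation at `r`. -/
noncomputable def ev (r : ℂ) (x : Q4) : ℂ :=
  x.1 + x.2.1 * r + x.2.2.1 * r ^ 2 + x.2.2.2 * r ^ 3

theorem ev_add (r : ℂ) (x y : Q4) : ev r (qadd x y) = ev r x + ev r y := by
  simp only [ev, qadd]; push_cast; ring

theorem ev_sm (r : ℂ) (n : ℤ) (x : Q4) : ev r (qsm n x) = n * ev r x := by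
  simp only [ev, qsm]; push_cast; ring

theorem ev_cj {r : ℂ} {t : ℤ} (ht : t = 1 ∨ t = -1) (hr : (starRingEnd ℂ) r = t * r) (x : Q4) :
    ev r (qcj t x) = (starRingEnd ℂ) (ev r x) := by
  simp only [ev, qcj, map_add, map_mul, map_pow, map_intCast, hr]
  rcases ht with rfl | rfl <;> push_cast <;> ring

theorem ev_mul {r : ℂ} {s : ℤ} (hr : r ^ 4 = s * r ^ 2 + 1) (x y : Q4) :
    ev r (qmul s x y) = ev r x * ev r y := by
  obtain ⟨a0, a1, a2, a3⟩ := x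
  obtain ⟨b0, b1, b2, b3⟩ := y
  simp only [ev, qmul]
  push_cast
  linear_combination (-(a1 * b3 + a2 * b2 + a3 * b1 : ℂ) - (a2 * b3 + a3 * b2) * r
    - a3 * b3 * r ^ 2 - a3 * b3 * s) * hr

/-- Integral version of `epsZ4`. -/
def epsI : ZMod 4 → ZMod 4 → ℤ := fun h g =>
  if (h = 1 ∧ g = 3) ∨ (h = 3 ∧ g = 1) ∨ (h = 2 ∧ g = 1) ∨ (h = 2 ∧ g = 3) then -1 else 1

/-- Four term sums. -/
def qsum (f : ZMod 4 → Q4) : Q4 := qadd (qadd (qadd (f 0) (f 1)) (f 2)) (f 3)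

/-- Indicator. -/
def qd (b : Prop) [Decidable b] : ℤ := if b then 1 else 0

/-- Equation (9) for doubled integral data. -/
def Chk9 (s : ℤ) (c : Q4) (B : ZMod 4 → ZMod 4 → ZMod 4 → Q4) : Prop :=
  ∀ g p q x y : ZMod 4,
    qsum (fun l => qmul s (qmul s (B g (x + y) l) (B (g - p + x) (-x) (l + p)))
      (B (g - q + x + y) (-y) (l + q))) =
    qadd (qsm (2 * (epsI p (g - p + x) * epsI (p + x) (g - p + q + y) *
        epsI q (g - q + x + y) * epsI (q + y) (g - q + x)))
        (qmul s (B g (p + x) (q + x + y)) (B (g - p) (q + y) (p + x + y))))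
      (qsm (-8 * (qd (x = 0) * qd (y = 0))) c)

/-- The other equations for doubled integral data. -/
structure Chk (s t : ℤ) (c : Q4) (B : ZMod 4 → ZMod 4 → ZMod 4 → Q4) : Prop where
  eq3 : ∀ g, qsum (fun h => B g h 0) = qsm (-2) c
  eq4 : ∀ g g' k : ZMod 4,
    qsum (fun h => qmul s (B g (h - g) k) (qcj t (B g' (h - g') k))) =
      qadd (qsm (4 * qd (g = g')) (1, 0, 0, 0)) (qsm (-4 * qd (k = 0)) c)
  eq5 : ∀ g h p q : ZMod 4,
    B (g + h + h) p q =
      qsm (epsI h g * epsI h (g + p) * epsI h (g + q) * epsI h (g + p + q)) (B g p q)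
  eq6 : ∀ g h k, B g k h = qcj t (B g h k)
  eq7a : ∀ g h k, B g h k =
    qsm (epsI (-k) (g + h) * epsI (-k) (g + k) * epsI (-k) (g + h + k)) (B g (-k) (h - k))
  eq7b : ∀ g h k, B g h k =
    qsm (epsI (-h) (g + h) * epsI (-h) (g + k) * epsI (-h) (g + h + k)) (B g (k - h) (-h))
  eq8a : ∀ g h k, B g h k = qsm (epsI h g * epsI h (g + k)) (B (g + h) h k)
  eq8b : ∀ g h k, B g h k = qsm (epsI k g * epsI k (g + h)) (B (g + k) h k)

/-- Doubled solution I. -/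
def B1 : ZMod 4 → ZMod 4 → ZMod 4 → Q4 := fun g h k =>
  Tab (qsm (-1)) (2, 0, 1, 0) (0, 0, 1, 0) (0, 0, 1, 0) (0, 0, 1, 0) (2, 0, 1, 0) (0, 0, 1, 0)
    (-1, 1, 0, 0) (-1, -1, 0, 0) (idx4 g) (idx4 h) (idx4 k)

/-- Doubled solution II. -/
def B2 : ZMod 4 → ZMod 4 → ZMod 4 → Q4 := fun g h k =>
  Tab (qsm (-1)) (1, 0, -2, 0) (0, 1, -1, 0) (1, 0, 0, 0) (0, -1, -1, 0) (1, 0, -2, 0) (1, 0, 0, 0)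
    (-1, 0, 0, 0) (-1, 0, 0, 0) (idx4 g) (idx4 h) (idx4 k)

theorem chk1 : Chk 1 (-1) (-1, 0, -2, 0) B1 := by
  constructor <;> decide +kernel

theorem chk2 : Chk (-1) 1 (-1, 0, 2, 0) B2 := by
  constructor <;> decide +kernel

theorem chk91 : Chk9 1 (-1, 0, -2, 0) B1 := by
  unfold Chk9
  decide +kernel

theorem chk92 : Chk9 (-1) (-1, 0, 2, 0) B2 := by
  unfold Chk9
  decide +kernel

theorem epsI_cast (h g : ZMod 4) : epsZ4 h g = (epsI h g : ℂ) := by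
  unfold epsZ4 epsI; split_ifs <;> simp

theorem epsI_one : ∀ g h k : ZMod 4, epsI (h + k) g = epsI h g * epsI k (g + h + h) := by decide

theorem epsI_zero : ∀ h : ZMod 4, epsI h 0 = 1 := by decide

theorem qd_cast (b : Prop) [Decidable b] : (qd b : ℂ) = if b then 1 else 0 := by
  unfold qd; split_ifs <;> simp

theorem ev_sum (r : ℂ) (f : ZMod 4 → Q4) : ev r (qsum f) = ∑ h, ev r (f h) := by
  rw [sum4]; simp only [qsum, ev_add]

theorem ev_one (r : ℂ) : ev r (1, 0, 0, 0) = 1 := by simp [ev]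

theorem transfer {s t : ℤ} {c : Q4} {B : ZMod 4 → ZMod 4 → ZMod 4 → Q4} {r : ℂ}
    (C : Chk s t c B) (C9 : Chk9 s c B) (ht : t = 1 ∨ t = -1)
    (hc : (starRingEnd ℂ) r = t * r) (hr : r ^ 4 = s * r ^ 2 + 1)
    (hd : ev r c = ((√5 - 2 : ℝ) : ℂ)) :
    PolySolution epsZ4 (fun _ => 1) (fun g h k => ev r (B g h k) / 2) where
  eps_pm h g := by unfold epsZ4; split_ifs <;> simp
  eq1 g h k := by simp only [epsI_cast]; exact_mod_cast epsI_one g h k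
  eq1' h := by simp only [epsI_cast]; exact_mod_cast epsI_zero h
  eq2 _ _ := rfl
  eq2' _ := by simp
  eq3 g := by
    have h := congrArg (ev r) (C.eq3 g)
    rw [ev_sum, ev_sm, hd] at h
    rw [div_dC, ← Finset.sum_div, h]
    push_cast [map_one]
    ring
  eq4 g g' k := by
    have h := congrArg (ev r) (C.eq4 g g' k)
    simp only [ev_sum, ev_sm, ev_add, ev_mul hr, ev_cj ht hc, hd, ev_one] at h
    have h2 : ∀ x y : ℂ, x / 2 * (starRingEnd ℂ) (y / 2) = x * (starRingEnd ℂ) y / 4 := by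
      intro x y; rw [map_div₀, Complex.conj_ofNat]; ring
    simp only [h2]
    rw [div_dC, ← Finset.sum_div, h]
    push_cast [map_one, qd_cast]
    ring
  eq5 g h p q := by
    simp only [C.eq5 g h p q, ev_sm, epsI_cast]; push_cast; ring
  eq6 g h k := by
    simp only [C.eq6 g h k, ev_cj ht hc, map_div₀, Complex.conj_ofNat]
  eq7a g h k := by
    have := congrArg (ev r) (C.eq7a g h k)
    simp only [this, ev_sm, epsI_cast]; push_cast; ring
  eq7b g h k := by
    have := congrArg (ev r) (C.eq7b g h k)
    simp only [this, ev_sm, epsI_cast, map_one]; push_cast; ring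
  eq8a g h k := by
    have := congrArg (ev r) (C.eq8a g h k)
    simp only [this, ev_sm, epsI_cast, map_one]; push_cast; ring
  eq8b g h k := by
    have := congrArg (ev r) (C.eq8b g h k)
    simp only [this, ev_sm, epsI_cast, map_one]; push_cast; ring
  eq9 g p q x y := by
    have h := congrArg (ev r) (C9 g p q x y)
    simp only [ev_sum, ev_sm, ev_add, ev_mul hr, hd] at h
    have h2 : ∀ x y z : ℂ, x / 2 * (y / 2) * (z / 2) = x * y * z / 8 := by
      intro x y z; ring
    unfold Eq9At
    simp only [h2]
    rw [div_dC, ← Finset.sum_div, h]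
    push_cast [map_one, qd_cast, epsI_cast]
    ring

theorem tab_map {R R' : Type} {f : R → R} {f' : R' → R'} (F : R → R') (hf : ∀ x, F (f x) = f' (F x))
    (t0 t1 t2 t3 s0 s2 u v : R) (i j k : Fin 4) :
    F (Tab f t0 t1 t2 t3 s0 s2 u v i j k) =
      Tab f' (F t0) (F t1) (F t2) (F t3) (F s0) (F s2) (F u) (F v) i j k := by
  fin_cases i <;> fin_cases j <;> fin_cases k <;> simp [Tab, hf]

/-- The general shape of the solutions, with real parameters. -/
noncomputable def Sol (q x0 x1 x2 x3 : ℝ) : ZMod 4 → ZMod 4 → ZMod 4 → ℂ := fun g h k =>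
  Tab (fun x => -x) (x0 : ℂ) x1 x2 x3 x0 x2
        (-1 / 2 + q * I) (-1 / 2 - q * I) (idx4 g) (idx4 h) (idx4 k)

theorem eps_vals : epsZ4 0 0 = 1 ∧ epsZ4 0 1 = 1 ∧ epsZ4 0 2 = 1 ∧ epsZ4 0 3 = 1 ∧
    epsZ4 1 0 = 1 ∧ epsZ4 1 1 = 1 ∧ epsZ4 1 2 = 1 ∧ epsZ4 1 3 = -1 ∧
    epsZ4 2 0 = 1 ∧ epsZ4 2 1 = -1 ∧ epsZ4 2 2 = 1 ∧ epsZ4 2 3 = -1 ∧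
    epsZ4 3 0 = 1 ∧ epsZ4 3 1 = -1 ∧ epsZ4 3 2 = 1 ∧ epsZ4 3 3 = 1 := by
  simp only [epsI_cast, show epsI 0 0 = 1 by decide, show epsI 0 1 = 1 by decide,
    show epsI 0 2 = 1 by decide, show epsI 0 3 = 1 by decide, show epsI 1 0 = 1 by decide,
    show epsI 1 1 = 1 by decide, show epsI 1 2 = 1 by decide, show epsI 1 3 = -1 by decide,
    show epsI 2 0 = 1 by decide, show epsI 2 1 = -1 by decide, show epsI 2 2 = 1 by decide,
    show epsI 2 3 = -1 by decide, show epsI 3 0 = 1 by decide, show epsI 3 1 = -1 by decide,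
    show epsI 3 2 = 1 by decide, show epsI 3 3 = 1 by decide]
  simp

theorem equiv_id {ε : ZMod 4 → ZMod 4 → ℂ} {A : ZMod 4 → ZMod 4 → ZMod 4 → ℂ} {a : ℂ}
    (ha : a = 1 ∨ a = -1)
    (E : (∀ g, ε 0 g = 1) ∧ (∀ h, ε h 0 = 1) ∧ (∀ h, ε h 2 = 1) ∧ ε 1 1 = a ∧ ε 1 3 = -a ∧
      ε 2 1 = -1 ∧ ε 2 3 = -1 ∧ ε 3 1 = -a ∧ ε 3 3 = a) {q x0 x1 x2 x3 : ℝ}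
    (T : ∀ g h k, A g h k = gau a (Sol q x0 x1 x2 x3) g h k) :
    EquivSol ε (fun _ => 1) A epsZ4 (fun _ => 1) (Sol q x0 x1 x2 x3) ∧
    EquivSol ε (fun _ => 1) A epsZ4 (fun _ => 1) (Sol (-q) x0 x3 x2 x1) := by
  have aa : a * a = 1 := by rcases ha with rfl | rfl <;> simp
  have aax : ∀ x, a * (a * x) = x := fun x => by rw [← mul_assoc, aa, one_mul]
  have hg : ∀ g, gg a g = 1 ∨ gg a g = -1 := by
    intro g; unfold gg; split_ifs <;> simp [ha]
  have hgg : ∀ g x, gg a g * (gg a g * x) = x := by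
    intro g x; rcases hg g with h | h <;> simp [h]
  constructor
  · refine ⟨gg a, AddEquiv.refl _, (ggs a).1, hg, ?_, fun _ => rfl, ?_⟩
    · refine z4_forall ?_ ?_ ?_ ?_ <;> refine z4_forall ?_ ?_ ?_ ?_ <;>
      simp only [AddEquiv.refl_apply, z4, ggs, eps_vals, E, one_mul, mul_one, mul_neg, aa]
    · intro g h k
      simp only [AddEquiv.refl_apply, T, gau]
      rcases hg g with h1 | h1 <;> rcases hg (g + h) with h2 | h2 <;>
      rcases hg (g + k) with h3 | h3 <;> rcases hg (g + h + k) with h4 | h4 <;>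
      simp [h1, h2, h3, h4]
  · refine ⟨gg a, AddEquiv.neg _, (ggs a).1, hg, ?_, fun _ => rfl, ?_⟩
    · refine z4_forall ?_ ?_ ?_ ?_ <;> refine z4_forall ?_ ?_ ?_ ?_ <;>
      simp only [AddEquiv.neg_apply, z4, ggs, eps_vals, E, one_mul, mul_one, mul_neg, aa]
    · have hn : ((-q : ℝ) : ℂ) * I = -(q * I) := by push_cast; ring
      refine z4_forall3 ?_ ?_ ?_ ?_ ?_ ?_ ?_ ?_ ?_ ?_ ?_ ?_ ?_ ?_ ?_ ?_ <;>
      refine z4_forall ?_ ?_ ?_ ?_ <;>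
      simp only [AddEquiv.neg_apply, T, gau, Sol, z4, ggs, idx4s, Tab, Matrix.cons_val, one_mul,
        mul_one, mul_assoc, aa, aax, hn, ← sub_eq_add_neg, sub_neg_eq_add]

/-- `√((√5 - 1) / 2)`. -/
noncomputable def q0 : ℝ := √((√5 - 1) / 2)

theorem q0_sq : q0 * q0 = (√5 - 1) / 2 :=
  Real.mul_self_sqrt (by have := w_lo; linarith)

theorem q0_nn : 0 ≤ q0 := Real.sqrt_nonneg _

theorem q0_sq' : (q0 : ℂ) * q0 = (√5 - 1) / 2 := by
  exact_mod_cast congrArg (fun x : ℝ => (x : ℂ)) q0_sq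

theorem sqrt_phi : √((1 + √5) / 2) = q0 * ((1 + √5) / 2) := by
  have h : (1 + √5) / 2 = (q0 * ((1 + √5) / 2)) ^ 2 := by
    linear_combination (-(1 + √5) ^ 2 / 4) * q0_sq - (√5 + 1) / 8 * w_sq
  have h2 : 0 ≤ q0 * ((1 + √5) / 2) := mul_nonneg q0_nn (by positivity)
  conv_lhs => rw [h]
  exact Real.sqrt_sq h2

/-- Solution I. -/
noncomputable def S1 := Sol (q0 / 2) ((5 - √5) / 4) ((1 - √5) / 4) ((1 - √5) / 4) ((1 - √5) / 4)

/-- Solution II. -/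
noncomputable def S2 := Sol 0 ((2 - √5) / 2) ((1 - √5) / 4 + q0 / 2) (1 / 2) ((1 - √5) / 4 - q0 / 2)

theorem D_eq : 1 / (dC (ZMod 4) - 1) = (√5 - 1) / 4 := by
  have h : dC (ZMod 4) - 1 ≠ 0 := by
    rw [dC4]
    have := w_lo
    have h : (0 : ℝ) < 2 + √5 - 1 := by linarith
    exact_mod_cast h.ne'
  rw [div_eq_iff h, dC4]
  linear_combination -wC_sq / 4

theorem AZ4_eq : AZ4 = S1 := by
  have hz : zZ4 = -((1 + √5) / 2) + q0 * ((1 + √5) / 2) * I := by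
    unfold zZ4; rw [sqrt_phi]; push_cast; ring
  have hz' : star zZ4 = -((1 + √5) / 2) - q0 * ((1 + √5) / 2) * I := by
    rw [← starRingEnd_apply, hz]
    simp [sub_eq_add_neg, Complex.conj_ofNat]
  have c0 : ((√5 : ℂ) - 1) / 4 * (dC (ZMod 4) - 2) = ((5 - √5) / 4 : ℝ) := by
    rw [dC4]; push_cast; linear_combination wC_sq / 4
  have c1 : ((√5 : ℂ) - 1) / 4 * -1 = ((1 - √5) / 4 : ℝ) := by push_cast; ring
  have c2 : ((√5 : ℂ) - 1) / 4 * 1 = -((1 - √5) / 4 : ℝ) := by push_cast; ring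
  have c3 : ((√5 : ℂ) - 1) / 4 * zZ4 = -1 / 2 + (q0 / 2 : ℝ) * I := by
    rw [hz]; push_cast; linear_combination (-1 / 8 + q0 * I / 8) * wC_sq
  have c4 : ((√5 : ℂ) - 1) / 4 * star zZ4 = -1 / 2 - (q0 / 2 : ℝ) * I := by
    rw [hz']; push_cast; linear_combination (-1 / 8 - q0 * I / 8) * wC_sq
  have c5 : ((√5 : ℂ) - 1) / 4 * -zZ4 = -(-1 / 2 + (q0 / 2 : ℝ) * I) := by
    rw [mul_neg, c3]
  have c6 : ((√5 : ℂ) - 1) / 4 * -star zZ4 = -(-1 / 2 - (q0 / 2 : ℝ) * I) := by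
    rw [mul_neg, c4]
  funext g h k
  revert g h k
  refine z4_forall3 ?_ ?_ ?_ ?_ ?_ ?_ ?_ ?_ ?_ ?_ ?_ ?_ ?_ ?_ ?_ ?_ <;>
      refine z4_forall ?_ ?_ ?_ ?_ <;>
    simp only [AZ4, D_eq, AmatZ4, idx4s, S1, Sol, Tab, Matrix.cons_val, c0, c1, c2, c3, c4, c5, c6]

theorem ev_neg (r : ℂ) (x : Q4) : ev r (qsm (-1) x) / 2 = -(ev r x / 2) := by
  rw [ev_sm]; push_cast; ring

theorem sol1 : PolySolution epsZ4 (fun _ => 1) S1 := by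
  have r2 : (I * q0) ^ 2 = (1 - √5) / 2 := by
    linear_combination (q0 : ℂ) ^ 2 * I_sq - q0_sq'
  have h := transfer (r := I * q0) chk1 chk91 (Or.inr rfl) (by simp)
    (by rw [show (I * q0) ^ 4 = ((I * q0) ^ 2) ^ 2 by ring, r2]; push_cast
        linear_combination wC_sq / 4)
    (by simp only [ev, r2]; push_cast; ring)
  convert h using 1
  funext g h k
  unfold B1 S1 Sol
  rw [tab_map (fun x => ev (I * q0) x / 2) (ev_neg _)]
  simp only [ev, r2]
  push_cast
  ring_nf

theorem sol2 : PolySolution epsZ4 (fun _ => 1) S2 := by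
  have r2 : (q0 : ℂ) ^ 2 = (√5 - 1) / 2 := by
    linear_combination q0_sq'
  have h := transfer (r := q0) chk2 chk92 (Or.inl rfl) (by simp)
    (by rw [show (q0 : ℂ) ^ 4 = (q0 ^ 2) ^ 2 by ring, r2]; push_cast
        linear_combination wC_sq / 4)
    (by simp only [ev, r2]; push_cast; ring)
  convert h using 1
  funext g h k
  unfold B2 S2 Sol
  rw [tab_map (fun x => ev q0 x / 2) (ev_neg _)]
  simp only [ev, r2]
  push_cast
  ring_nf

theorem equiv_inv {ε ε' : ZMod 4 → ZMod 4 → ℂ} {η η' : ZMod 4 → ℂ}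
    {A A' : ZMod 4 → ZMod 4 → ZMod 4 → ℂ} (H : EquivSol ε η A ε' η' A') :
    ∃ θ : ZMod 4 ≃+ ZMod 4, ∀ h, A' 0 h 0 = A 0 (θ h) 0 := by
  obtain ⟨δ, θ, h0, hd, -, -, hA⟩ := H
  refine ⟨θ, fun h => ?_⟩
  rw [hA]
  simp only [h0, zero_add, add_zero, map_zero]
  rcases hd h with h | h <;> simp [h]

theorem S2_ne : ((2 - √5) / 2 : ℝ) ≠ (5 - √5) / 4 := by
  have := w_lo; intro h; linarith

theorem S1_zero : S1 0 0 0 = ((5 - √5) / 4 : ℝ) := rfl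

theorem S2_zero : S2 0 0 0 = ((2 - √5) / 2 : ℝ) := rfl

theorem S1_row : ∀ h : ZMod 4,
    S1 0 h 0 = (if h = (0 : ZMod 4) then (1 : ℂ) else 0) - 1 / (dC (ZMod 4) - 1) := by
  have d1 : (1 : ZMod 4) ≠ 0 := by decide
  have d2 : (2 : ZMod 4) ≠ 0 := by decide
  have d3 : (3 : ZMod 4) ≠ 0 := by decide
  refine z4_forall ?_ ?_ ?_ ?_ <;>
  simp only [S1, Sol, idx4s, Tab, Matrix.cons_val, D_eq, d1, d2, d3, if_true, if_false] <;>
  push_cast <;> ring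

theorem two_classes {ε : ZMod 4 → ZMod 4 → ℂ} {η : ZMod 4 → ℂ} {A : ZMod 4 → ZMod 4 → ZMod 4 → ℂ}
    (H : PolySolution ε η A) :
    EquivSol ε η A epsZ4 (fun _ => (1 : ℂ)) S1 ∨ EquivSol ε η A epsZ4 (fun _ => (1 : ℂ)) S2 := by
  obtain rfl : η = fun _ => 1 := funext (eta_one H.toPolyEqs1to8)
  obtain ⟨a, ha, E, x0, x1, x2, x3, q, hS, T⟩ := classify H
  obtain ⟨hi, hn⟩ := equiv_id ha E (q := q) (x0 := x0) (x1 := x1) (x2 := x2) (x3 := x3) T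
  rcases hS with ⟨rfl, rfl, rfl, rfl, hq⟩ | ⟨rfl, rfl, rfl, hs, hd⟩
  · left
    have h : (q - q0 / 2) * (q + q0 / 2) = 0 := by linear_combination hq - q0_sq / 4
    rcases mul_eq_zero.1 h with h | h
    · have h : q = q0 / 2 := by linarith
      subst h
      exact hi
    · have h : q = -(q0 / 2) := by linarith
      subst h
      rw [neg_neg] at hn
      exact hn
  · right
    have h : (x1 - x3 - q0) * (x1 - x3 + q0) = 0 := by linear_combination hd - q0_sq
    rcases mul_eq_zero.1 h with h | h
    · have h1 : x1 = (1 - √5) / 4 + q0 / 2 := by linarith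
      have h3 : x3 = (1 - √5) / 4 - q0 / 2 := by linarith
      subst h1 h3
      exact hi
    · have h1 : x3 = (1 - √5) / 4 + q0 / 2 := by linarith
      have h3 : x1 = (1 - √5) / 4 - q0 / 2 := by linarith
      subst h1 h3
      rw [neg_zero] at hn
      exact hn

/-- Classification of solutions of the polynomial equations for `G = ℤ/4ℤ` (where
`d = 2+√5`): every solution has `η ≡ 1`; up to gauge equivalence and automorphisms of `G`
there are exactly two solutions; exactly one of the two classes satisfies the `Q`-system
condition `A_0(h,0) = δ_{h,0} − 1/(d−1)`, and the explicit solution `(epsZ4, 1, AZ4)` is a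
representative of that class. -/
theorem polySolution_zmod_four_classification :
    dR (ZMod 4) = 2 + Real.sqrt 5 ∧
    PolySolution epsZ4 (fun _ => (1 : ℂ)) AZ4 ∧
    (∀ (ε : ZMod 4 → ZMod 4 → ℂ) (η : ZMod 4 → ℂ) (A : ZMod 4 → ZMod 4 → ZMod 4 → ℂ),
      PolySolution ε η A → ∀ g : ZMod 4, η g = 1) ∧
    (∃ (ε₁ : ZMod 4 → ZMod 4 → ℂ) (η₁ : ZMod 4 → ℂ) (A₁ : ZMod 4 → ZMod 4 → ZMod 4 → ℂ),
      PolySolution ε₁ η₁ A₁ ∧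
      ¬ EquivSol ε₁ η₁ A₁ epsZ4 (fun _ => (1 : ℂ)) AZ4 ∧
      ∀ (ε : ZMod 4 → ZMod 4 → ℂ) (η : ZMod 4 → ℂ) (A : ZMod 4 → ZMod 4 → ZMod 4 → ℂ),
        PolySolution ε η A →
          EquivSol ε η A epsZ4 (fun _ => (1 : ℂ)) AZ4 ∨ EquivSol ε η A ε₁ η₁ A₁) ∧
    (∀ (ε : ZMod 4 → ZMod 4 → ℂ) (η : ZMod 4 → ℂ) (A : ZMod 4 → ZMod 4 → ZMod 4 → ℂ),
      PolySolution ε η A →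
        ((∀ h : ZMod 4,
            A 0 h 0 = (if h = (0 : ZMod 4) then (1 : ℂ) else 0) - 1 / (dC (ZMod 4) - 1)) ↔
          EquivSol ε η A epsZ4 (fun _ => (1 : ℂ)) AZ4)) := by
  rw [AZ4_eq]
  refine ⟨dR4, sol1, fun ε η A H => eta_one H.toPolyEqs1to8,
    ⟨epsZ4, fun _ => 1, S2, sol2, ?_, fun ε η A H => two_classes H⟩, fun ε η A H => ⟨?_, ?_⟩⟩
  · intro h
    obtain ⟨θ, hθ⟩ := equiv_inv h
    have h0 := hθ 0
    rw [map_zero, S1_zero, S2_zero] at h0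
    exact S2_ne (by exact_mod_cast h0.symm)
  · intro hA
    refine (two_classes H).resolve_right fun h => ?_
    obtain ⟨θ, hθ⟩ := equiv_inv h
    have h0 := hθ 0
    rw [map_zero, hA, ← S1_row, S1_zero, S2_zero] at h0
    exact S2_ne (by exact_mod_cast h0)
  · intro h x
    obtain ⟨θ, hθ⟩ := equiv_inv h
    have h0 := hθ (θ.symm x)
    rw [AddEquiv.apply_symm_apply] at h0
    rw [← h0, S1_row]
    simp only [EmbeddingLike.map_eq_zero_iff]
end

section
/- Let G = ℤ/2 × ℤ/2 and d = 2+√5. There is exactly one function x : G×G → ℝ satisfying x_{g,h} = x_{g+h,h} for all g,h together with equations (Deg1)–(Deg3), namely x_{g,0} = 1 − 1/(d−1) = (5−√5)/4 for all g, and x_{g,h} = −1/(d−1) = (1−√5)/4 for all g and all h ≠ 0. -/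
open scoped BigOperators

set_option linter.unusedSimpArgs false

lemma kf_tr1 (p q r s t u : ℝ) (h1 : p^2+q^2+r^2=p) (h2 : q^2+s^2+t^2=s) (h3 : r^2+t^2+u^2=u)
    (h4 : p*q+q*s+r*t=q) (h5 : p*r+q*t+r*u=r) (h6 : q*r+s*t+t*u=t) (hT : p+s+u=1) :
    ∃ a b c : ℝ, p=a*a ∧ q=a*b ∧ r=a*c ∧ s=b*b ∧ t=b*c ∧ u=c*c := by
  have e1 : r*t = q*u := by linear_combination h4 - q*hT
  have e2 : q*t = r*s := by linear_combination h5 - r*hT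
  have e3 : q*r = t*p := by linear_combination h6 - t*hT
  have E : p*s+p*u+s*u-q^2-r^2-t^2 = 0 := by
    linear_combination (1/2)*(p+s+u)*hT - (1/2)*h1 - (1/2)*h2 - (1/2)*h3
  have e4 : s*u = t^2 := by linear_combination h1 + E - p*hT
  have e5 : p*u = r^2 := by linear_combination h2 + E - s*hT
  have e6 : p*s = q^2 := by linear_combination h3 + E - u*hT
  have key : 0 < p ∨ 0 < s ∨ 0 < u := by
    by_contra! hh
    linarith [hh.1, hh.2.1, hh.2.2]
  rcases key with hp | hp | hp
  · have hs := Real.mul_self_sqrt hp.le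
    have hn : Real.sqrt p ≠ 0 := (Real.sqrt_pos.2 hp).ne'
    generalize Real.sqrt p = z at hs hn
    refine ⟨z, q/z, r/z, ?_, ?_, ?_, ?_, ?_, ?_⟩ <;> field_simp <;> try grind
  · have hs := Real.mul_self_sqrt hp.le
    have hn : Real.sqrt s ≠ 0 := (Real.sqrt_pos.2 hp).ne'
    generalize Real.sqrt s = z at hs hn
    refine ⟨q/z, z, t/z, ?_, ?_, ?_, ?_, ?_, ?_⟩ <;> field_simp <;> try grind
  · have hs := Real.mul_self_sqrt hp.le
    have hn : Real.sqrt u ≠ 0 := (Real.sqrt_pos.2 hp).ne'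
    generalize Real.sqrt u = z at hs hn
    refine ⟨r/z, t/z, z, ?_, ?_, ?_, ?_, ?_, ?_⟩ <;> field_simp <;> try grind

lemma kf_class (p q r s t u : ℝ) (h1 : p^2+q^2+r^2=p) (h2 : q^2+s^2+t^2=s) (h3 : r^2+t^2+u^2=u)
    (h4 : p*q+q*s+r*t=q) (h5 : p*r+q*t+r*u=r) (h6 : q*r+s*t+t*u=t) :
    (p=0 ∧ q=0 ∧ r=0 ∧ s=0 ∧ t=0 ∧ u=0) ∨ (p=1 ∧ q=0 ∧ r=0 ∧ s=1 ∧ t=0 ∧ u=1) ∨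
    (∃ a b c : ℝ, a^2+b^2+c^2=1 ∧ p=a*a ∧ q=a*b ∧ r=a*c ∧ s=b*b ∧ t=b*c ∧ u=c*c) ∨
    (∃ a b c : ℝ, a^2+b^2+c^2=1 ∧
      p=1-a*a ∧ q=-(a*b) ∧ r=-(a*c) ∧ s=1-b*b ∧ t=-(b*c) ∧ u=1-c*c) := by
  by_cases hT1 : p+s+u=1
  · right; right; left
    obtain ⟨a,b,c,e1,e2,e3,e4,e5,e6⟩ := kf_tr1 p q r s t u h1 h2 h3 h4 h5 h6 hT1
    exact ⟨a,b,c,by linarith,e1,e2,e3,e4,e5,e6⟩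
  by_cases hT2 : p+s+u=2
  · right; right; right
    obtain ⟨a,b,c,e1,e2,e3,e4,e5,e6⟩ := kf_tr1 (1-p) (-q) (-r) (1-s) (-t) (1-u)
      (by linarith) (by linarith) (by linarith) (by linarith) (by linarith) (by linarith)
      (by linarith)
    exact ⟨a,b,c,by linarith,by linarith,by linarith,by linarith,by linarith,by linarith,by linarith⟩
  have E : p*s+p*u+s*u-q^2-r^2-t^2 = ((p+s+u)^2-(p+s+u))/2 := by
    linear_combination - (1/2)*h1 - (1/2)*h2 - (1/2)*h3
  have f12 : r*t-q*u = (1-(p+s+u))*q := by linear_combination h4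
  have f13 : q*t-r*s = (1-(p+s+u))*r := by linear_combination h5
  have f23 : q*r-t*p = (1-(p+s+u))*t := by linear_combination h6
  have f11 : s*u-t^2 = (1-(p+s+u))*p + ((p+s+u)^2-(p+s+u))/2 := by linear_combination h1 + E
  have f22 : p*u-r^2 = (1-(p+s+u))*s + ((p+s+u)^2-(p+s+u))/2 := by linear_combination h2 + E
  have f33 : p*s-q^2 = (1-(p+s+u))*u + ((p+s+u)^2-(p+s+u))/2 := by linear_combination h3 + E
  have hk : ((p+s+u)-1)*((p+s+u)-2) ≠ 0 :=
    mul_ne_zero (sub_ne_zero.2 hT1) (sub_ne_zero.2 hT2)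
  generalize hT : p+s+u = T at *
  have gq : ((T-1)*(T-2))*q = 0 := by
    linear_combination (-2)*(p*f12+q*f22+r*f23) - 2*(1-T)*h4
  have gr : ((T-1)*(T-2))*r = 0 := by
    linear_combination (-2)*(p*f13+q*f23+r*f33) - 2*(1-T)*h5
  have gt : ((T-1)*(T-2))*t = 0 := by
    linear_combination (-2)*(q*f13+s*f23+t*f33) - 2*(1-T)*h6
  have gps : ((T-1)*(T-2))*(p-s) = 0 := by
    linear_combination (-2)*(p*f11+q*f12+r*f13) - 2*(1-T)*h1 + 2*(q*f12+s*f22+t*f23) + 2*(1-T)*h2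
  have gpu : ((T-1)*(T-2))*(p-u) = 0 := by
    linear_combination (-2)*(p*f11+q*f12+r*f13) - 2*(1-T)*h1 + 2*(r*f13+t*f23+u*f33) + 2*(1-T)*h3
  have q0 := (mul_eq_zero.1 gq).resolve_left hk
  have r0 := (mul_eq_zero.1 gr).resolve_left hk
  have t0 := (mul_eq_zero.1 gt).resolve_left hk
  have s0 := (mul_eq_zero.1 gps).resolve_left hk
  have u0 := (mul_eq_zero.1 gpu).resolve_left hk
  have : p*(p-1)=0 := by rw [q0,r0] at h1; linarith
  rcases mul_eq_zero.1 this with h | h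
  · left; refine ⟨?_,?_,?_,?_,?_,?_⟩ <;> linarith
  · right; left; refine ⟨?_,?_,?_,?_,?_,?_⟩ <;> linarith

lemma kf_sum (f : ZMod 2 × ZMod 2 → ℝ) :
    ∑ l, f l = f (0,0) + f (0,1) + f (1,0) + f (1,1) := by
  rw [Fintype.sum_prod_type]
  have h : ∀ f : ZMod 2 → ℝ, ∑ i, f i = f 0 + f 1 := fun f => Fin.sum_univ_two f
  simp only [h]
  ring

lemma kf_all (P : ZMod 2 × ZMod 2 → Prop) (h0 : P (0,0)) (h1 : P (0,1)) (h2 : P (1,0))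
    (h3 : P (1,1)) : ∀ g, P g := by
  rintro ⟨a, b⟩
  fin_cases a <;> fin_cases b <;> assumption

/-- character basis -/
noncomputable def kfv (a b c : ℝ) (g : ZMod 2 × ZMod 2) : ℝ :=
  if g = (0,0) then (a+b+c)/2 else if g = (0,1) then (a-b-c)/2
  else if g = (1,0) then (b-a-c)/2 else (c-a-b)/2

lemma kfv0 (a b c : ℝ) : kfv a b c (0,0) = (a+b+c)/2 := by simp [kfv]
lemma kfv1 (a b c : ℝ) : kfv a b c (0,1) = (a-b-c)/2 := by simp [kfv]
lemma kfv2 (a b c : ℝ) : kfv a b c (1,0) = (b-a-c)/2 := by simp [kfv]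
lemma kfv3 (a b c : ℝ) : kfv a b c (1,1) = (c-a-b)/2 := by simp [kfv]

lemma kf_struct (z : ℝ) (A : ZMod 2 × ZMod 2 → ZMod 2 × ZMod 2 → ℝ)
    (hs : ∀ g k, A g k = A k g) (hr : ∀ g, ∑ k, A g k = 2 - z)
    (hq : ∀ g k, ∑ l, A g l * A k l = (if g = k then (1:ℝ) else 0) - (z-2)) :
    (∀ g k, A g k = (if g = k then (1:ℝ) else 0) - (z-1)/4) ∨
    (∀ g k, A g k = -(if g = k then (1:ℝ) else 0) + (3-z)/4) ∨
    (∃ v : ZMod 2 × ZMod 2 → ℝ, ∑ g, v g = 0 ∧ ∑ g, v g ^ 2 = 1 ∧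
      ∀ g k, A g k = (if g = k then (1:ℝ) else 0) - 2 * (v g * v k) - (z-1)/4) ∨
    (∃ v : ZMod 2 × ZMod 2 → ℝ, ∑ g, v g = 0 ∧ ∑ g, v g ^ 2 = 1 ∧
      ∀ g k, A g k = -(if g = k then (1:ℝ) else 0) + 2 * (v g * v k) + (3-z)/4) := by
  -- characters: χ1 = (1,1,-1,-1), χ2 = (1,-1,1,-1), χ3 = (1,-1,-1,1)
  have s01 := hs (0,1) (0,0)
  have s02 := hs (1,0) (0,0)
  have s03 := hs (1,1) (0,0)
  have s12 := hs (1,0) (0,1)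
  have s13 := hs (1,1) (0,1)
  have s23 := hs (1,1) (1,0)
  have r0 := hr (0,0)
  have r1 := hr (0,1)
  have r2 := hr (1,0)
  have r3 := hr (1,1)
  have q00 := hq (0,0) (0,0)
  have q11 := hq (0,1) (0,1)
  have q22 := hq (1,0) (1,0)
  have q33 := hq (1,1) (1,1)
  have q01 := hq (0,0) (0,1)
  have q02 := hq (0,0) (1,0)
  have q03 := hq (0,0) (1,1)
  have q12 := hq (0,1) (1,0)
  have q13 := hq (0,1) (1,1)
  have q23 := hq (1,0) (1,1)
  simp only [kf_sum] at r0 r1 r2 r3 q00 q11 q22 q33 q01 q02 q03 q12 q13 q23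
  simp only [Prod.mk.injEq, zero_ne_one, one_ne_zero, and_true, and_false, true_and, false_and,
    if_true, if_false] at q00 q11 q22 q33 q01 q02 q03 q12 q13 q23
  obtain ⟨a00, h00⟩ : ∃ y : ℝ, A (0,0) (0,0) = y := ⟨_, rfl⟩
  obtain ⟨a01, h01⟩ : ∃ y : ℝ, A (0,0) (0,1) = y := ⟨_, rfl⟩
  obtain ⟨a02, h02⟩ : ∃ y : ℝ, A (0,0) (1,0) = y := ⟨_, rfl⟩
  obtain ⟨a03, h03⟩ : ∃ y : ℝ, A (0,0) (1,1) = y := ⟨_, rfl⟩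
  obtain ⟨a11, h11⟩ : ∃ y : ℝ, A (0,1) (0,1) = y := ⟨_, rfl⟩
  obtain ⟨a12, h12⟩ : ∃ y : ℝ, A (0,1) (1,0) = y := ⟨_, rfl⟩
  obtain ⟨a13, h13⟩ : ∃ y : ℝ, A (0,1) (1,1) = y := ⟨_, rfl⟩
  obtain ⟨a22, h22⟩ : ∃ y : ℝ, A (1,0) (1,0) = y := ⟨_, rfl⟩
  obtain ⟨a23, h23⟩ : ∃ y : ℝ, A (1,0) (1,1) = y := ⟨_, rfl⟩
  obtain ⟨a33, h33⟩ : ∃ y : ℝ, A (1,1) (1,1) = y := ⟨_, rfl⟩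
  simp only [s01, s02, s03, s12, s13, s23, h00, h01, h02, h03, h11, h12, h13, h22, h23, h33] at r0 r1 r2 r3 q00 q11 q22 q33 q01 q02 q03 q12 q13 q23
  obtain ⟨p, dp⟩ : ∃ y : ℝ, y = (4 - ((1)*a00+(2)*a01+(-2)*a02+(-2)*a03+(1)*a11+(-2)*a12+(-2)*a13+(1)*a22+(2)*a23+(1)*a33))/8 := ⟨_, rfl⟩
  obtain ⟨q, dq⟩ : ∃ y : ℝ, y = (0 - ((1)*a00+(-2)*a03+(-1)*a11+(2)*a12+(-1)*a22+(1)*a33))/8 := ⟨_, rfl⟩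
  obtain ⟨r, dr⟩ : ∃ y : ℝ, y = (0 - ((1)*a00+(-2)*a02+(-1)*a11+(2)*a13+(1)*a22+(-1)*a33))/8 := ⟨_, rfl⟩
  obtain ⟨s, ds⟩ : ∃ y : ℝ, y = (4 - ((1)*a00+(-2)*a01+(2)*a02+(-2)*a03+(1)*a11+(-2)*a12+(2)*a13+(1)*a22+(-2)*a23+(1)*a33))/8 := ⟨_, rfl⟩
  obtain ⟨t, dt⟩ : ∃ y : ℝ, y = (0 - ((1)*a00+(-2)*a01+(1)*a11+(-1)*a22+(2)*a23+(-1)*a33))/8 := ⟨_, rfl⟩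
  obtain ⟨u, du⟩ : ∃ y : ℝ, y = (4 - ((1)*a00+(-2)*a01+(-2)*a02+(2)*a03+(1)*a11+(2)*a12+(-2)*a13+(1)*a22+(-2)*a23+(1)*a33))/8 := ⟨_, rfl⟩
  have A00 : a00 = 1 - (z-1)/4 - ((1)*p+(2)*q+(2)*r+(1)*s+(2)*t+(1)*u)/2 := by
    linarith only [r0,r1,r2,r3,dp,dq,dr,ds,dt,du]
  have A01 : a01 = 0 - (z-1)/4 - ((1)*p+(-1)*s+(-2)*t+(-1)*u)/2 := by
    linarith only [r0,r1,r2,r3,dp,dq,dr,ds,dt,du]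
  have A02 : a02 = 0 - (z-1)/4 - ((-1)*p+(-2)*r+(1)*s+(-1)*u)/2 := by
    linarith only [r0,r1,r2,r3,dp,dq,dr,ds,dt,du]
  have A03 : a03 = 0 - (z-1)/4 - ((-1)*p+(-2)*q+(-1)*s+(1)*u)/2 := by
    linarith only [r0,r1,r2,r3,dp,dq,dr,ds,dt,du]
  have A11 : a11 = 1 - (z-1)/4 - ((1)*p+(-2)*q+(-2)*r+(1)*s+(2)*t+(1)*u)/2 := by
    linarith only [r0,r1,r2,r3,dp,dq,dr,ds,dt,du]
  have A12 : a12 = 0 - (z-1)/4 - ((-1)*p+(2)*q+(-1)*s+(1)*u)/2 := by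
    linarith only [r0,r1,r2,r3,dp,dq,dr,ds,dt,du]
  have A13 : a13 = 0 - (z-1)/4 - ((-1)*p+(2)*r+(1)*s+(-1)*u)/2 := by
    linarith only [r0,r1,r2,r3,dp,dq,dr,ds,dt,du]
  have A22 : a22 = 1 - (z-1)/4 - ((1)*p+(-2)*q+(2)*r+(1)*s+(-2)*t+(1)*u)/2 := by
    linarith only [r0,r1,r2,r3,dp,dq,dr,ds,dt,du]
  have A23 : a23 = 0 - (z-1)/4 - ((1)*p+(-1)*s+(2)*t+(-1)*u)/2 := by
    linarith only [r0,r1,r2,r3,dp,dq,dr,ds,dt,du]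
  have A33 : a33 = 1 - (z-1)/4 - ((1)*p+(2)*q+(-2)*r+(1)*s+(-2)*t+(1)*u)/2 := by
    linarith only [r0,r1,r2,r3,dp,dq,dr,ds,dt,du]
  clear dp dq dr ds dt du r0 r1 r2 r3
  subst A00 A01 A02 A03 A11 A12 A13 A22 A23 A33
  have h1 : p^2+q^2+r^2=p := by linear_combination (1/16)*((1)*q00+(2)*q01+(-2)*q02+(-2)*q03+(1)*q11+(-2)*q12+(-2)*q13+(1)*q22+(2)*q23+(1)*q33)
  have h2 : q^2+s^2+t^2=s := by linear_combination (1/16)*((1)*q00+(-2)*q01+(2)*q02+(-2)*q03+(1)*q11+(-2)*q12+(2)*q13+(1)*q22+(-2)*q23+(1)*q33)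
  have h3 : r^2+t^2+u^2=u := by linear_combination (1/16)*((1)*q00+(-2)*q01+(-2)*q02+(2)*q03+(1)*q11+(2)*q12+(-2)*q13+(1)*q22+(-2)*q23+(1)*q33)
  have h4 : p*q+q*s+r*t=q := by linear_combination (1/16)*((1)*q00+(-2)*q03+(-1)*q11+(2)*q12+(-1)*q22+(1)*q33)
  have h5 : p*r+q*t+r*u=r := by linear_combination (1/16)*((1)*q00+(-2)*q02+(-1)*q11+(2)*q13+(1)*q22+(-1)*q33)
  have h6 : q*r+s*t+t*u=t := by linear_combination (1/16)*((1)*q00+(-2)*q01+(1)*q11+(-1)*q22+(2)*q23+(-1)*q33)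
  clear q00 q11 q22 q33 q01 q02 q03 q12 q13 q23
  rcases kf_class p q r s t u h1 h2 h3 h4 h5 h6 with ⟨e1, e2, e3, e4, e5, e6⟩ | ⟨e1, e2, e3, e4, e5, e6⟩ | ⟨a, b, c, hn, e1, e2, e3, e4, e5, e6⟩ | ⟨a, b, c, hn, e1, e2, e3, e4, e5, e6⟩
  · clear h1 h2 h3 h4 h5 h6
    refine Or.inl ?_
    subst e1 e2 e3 e4 e5 e6
    refine kf_all _ ?_ ?_ ?_ ?_ <;> refine kf_all _ ?_ ?_ ?_ ?_ <;>
    simp only [s01, s02, s03, s12, s13, s23, h00, h01, h02, h03, h11, h12, h13, h22, h23, h33, kfv0, kfv1, kfv2, kfv3, Prod.mk.injEq, zero_ne_one, one_ne_zero, and_true, and_false, true_and, false_and, if_true, if_false] <;> ring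
  · clear h1 h2 h3 h4 h5 h6
    refine Or.inr (Or.inl ?_)
    subst e1 e2 e3 e4 e5 e6
    refine kf_all _ ?_ ?_ ?_ ?_ <;> refine kf_all _ ?_ ?_ ?_ ?_ <;>
    simp only [s01, s02, s03, s12, s13, s23, h00, h01, h02, h03, h11, h12, h13, h22, h23, h33, kfv0, kfv1, kfv2, kfv3, Prod.mk.injEq, zero_ne_one, one_ne_zero, and_true, and_false, true_and, false_and, if_true, if_false] <;> ring
  · clear h1 h2 h3 h4 h5 h6
    refine Or.inr (Or.inr (Or.inl ⟨kfv a b c, by simp only [kf_sum, kfv0, kfv1, kfv2, kfv3]; ring, by simp only [kf_sum, kfv0, kfv1, kfv2, kfv3]; linear_combination hn, ?_⟩))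
    subst e1 e2 e3 e4 e5 e6
    refine kf_all _ ?_ ?_ ?_ ?_ <;> refine kf_all _ ?_ ?_ ?_ ?_ <;>
    simp only [s01, s02, s03, s12, s13, s23, h00, h01, h02, h03, h11, h12, h13, h22, h23, h33, kfv0, kfv1, kfv2, kfv3, Prod.mk.injEq, zero_ne_one, one_ne_zero, and_true, and_false, true_and, false_and, if_true, if_false] <;> ring
  · clear h1 h2 h3 h4 h5 h6
    refine Or.inr (Or.inr (Or.inr ⟨kfv a b c, by simp only [kf_sum, kfv0, kfv1, kfv2, kfv3]; ring, by simp only [kf_sum, kfv0, kfv1, kfv2, kfv3]; linear_combination hn, ?_⟩))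
    subst e1 e2 e3 e4 e5 e6
    refine kf_all _ ?_ ?_ ?_ ?_ <;> refine kf_all _ ?_ ?_ ?_ ?_ <;>
    simp only [s01, s02, s03, s12, s13, s23, h00, h01, h02, h03, h11, h12, h13, h22, h23, h33, kfv0, kfv1, kfv2, kfv3, Prod.mk.injEq, zero_ne_one, one_ne_zero, and_true, and_false, true_and, false_and, if_true, if_false] <;> ring

lemma kf_rank1 (z : ℝ) (z1 : 2.2 < z) (z2 : z < 2.3) (A : ZMod 2 × ZMod 2 → ZMod 2 × ZMod 2 → ℝ)
    (v : ZMod 2 × ZMod 2 → ℝ) (hv : ∑ g, v g = 0) (hn : ∑ g, v g ^ 2 = 1)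
    (hA : ∀ g k, A g k = (if g = k then (1:ℝ) else 0) - 2 * (v g * v k) - (z-1)/4)
    (hd : ∀ g y, ∑ k, A g k ^ 2 * A y k = A g y ^ 2 - (z-2)) : False := by
  rw [kf_sum] at hv hn
  have key : ∀ g y, 2 * v y * (∑ k, A g k ^ 2 * v k) + (z-1)/4 * (∑ k, A g k ^ 2) = z - 2 := by
    intro g y
    have h := hd g y
    rw [kf_sum] at h
    rw [hA y (0,0), hA y (0,1), hA y (1,0), hA y (1,1)] at h
    rw [kf_sum, kf_sum]
    revert h
    revert y
    refine kf_all _ ?_ ?_ ?_ ?_ <;> intro h <;>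
    simp only [Prod.mk.injEq, zero_ne_one, one_ne_zero, and_true, and_false, true_and, false_and, if_true, if_false] at h <;> linear_combination -h
  have hW : ∀ g, ∑ k, A g k ^ 2 * v k = 0 := by
    intro g
    have k0 := key g (0,0)
    have k1 := key g (0,1)
    have k2 := key g (1,0)
    have k3 := key g (1,1)
    generalize ∑ k, A g k ^ 2 * v k = W at *
    generalize ∑ k, A g k ^ 2 = S at *
    linear_combination (1/2)*(v (0,0)*k0 + v (0,1)*k1 + v (1,0)*k2 + v (1,1)*k3) - W*hn
      - (1/2)*((z-1)/4*S-(z-2))*hv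
  obtain ⟨T, hT⟩ : ∃ T, v (0,0)^3 + v (0,1)^3 + v (1,0)^3 + v (1,1)^3 = T := ⟨_, rfl⟩
  have h1 : ∀ g, v g * ((1+z)/2 - 4 * v g ^ 2 + 4 * v g * T) = 0 := by
    intro g
    have h := hW g
    rw [kf_sum, hA g (0,0), hA g (0,1), hA g (1,0), hA g (1,1)] at h
    subst hT
    revert h
    revert g
    refine kf_all _ ?_ ?_ ?_ ?_ <;> intro h <;>
    simp only [Prod.mk.injEq, zero_ne_one, one_ne_zero, and_true, and_false, true_and, false_and, if_true, if_false] at h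
    · linear_combination h - (z-1)*v (0,0)*hn - ((z-1)/4)^2*hv
    · linear_combination h - (z-1)*v (0,1)*hn - ((z-1)/4)^2*hv
    · linear_combination h - (z-1)*v (1,0)*hn - ((z-1)/4)^2*hv
    · linear_combination h - (z-1)*v (1,1)*hn - ((z-1)/4)^2*hv
  have h2 : ∀ g, ∃ n : ℝ, (n = 0 ∨ n = 1) ∧ 4 * v g ^ 2 = n * ((1+z)/2) + 4 * v g * T := by
    intro g
    rcases mul_eq_zero.1 (h1 g) with h | h
    · exact ⟨0, Or.inl rfl, by rw [h]; ring⟩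
    · exact ⟨1, Or.inr rfl, by linarith⟩
  obtain ⟨n0, c0, e0⟩ := h2 (0,0)
  obtain ⟨n1, c1, e1⟩ := h2 (0,1)
  obtain ⟨n2, c2, e2⟩ := h2 (1,0)
  obtain ⟨n3, c3, e3⟩ := h2 (1,1)
  have e : 4 = (n0+n1+n2+n3) * ((1+z)/2) := by
    linear_combination e0+e1+e2+e3 - 4*hn + 4*T*hv
  clear e0 e1 e2 e3
  rcases c0 with rfl | rfl <;> rcases c1 with rfl | rfl <;> rcases c2 with rfl | rfl <;>
    rcases c3 with rfl | rfl <;> linarith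

lemma kf_pair (θ g x y : ℝ) (hθ : 0 < θ) (hg : g ≠ 0)
    (h1 : 4*g^3*x^2+(4*g^2-4*g^4-3*θ/4)*x = θ*g/4)
    (h2 : 4*g^3*y^2+(4*g^2-4*g^4-3*θ/4)*y = θ*g/4)
    (h3 : 4*x^3*y^2+(4*x^2-4*x^4-3*θ/4)*y = θ*x/4) (hxy : 0 < x*y) : x = y ∧ 4*x^2=θ := by
  have e : x = y := by
    by_contra hne
    have a1 : (x-y)*(4*g^3*(x+y)+(4*g^2-4*g^4-3*θ/4)) = 0 := by linear_combination h1-h2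
    have a2 := (mul_eq_zero.1 a1).resolve_left (sub_ne_zero.2 hne)
    have a3 : g*(16*g^2*(x*y)+θ) = 0 := by linear_combination 4*x*a2-4*h1
    have a4 := (mul_eq_zero.1 a3).resolve_left hg
    have : 0 < g^2*(x*y) := by positivity
    linarith
  refine ⟨e, ?_⟩
  subst e
  have hx : x ≠ 0 := by rintro rfl; simp at hxy
  have : x*(4*x^2-θ)=0 := by linear_combination h3
  linarith [(mul_eq_zero.1 this).resolve_left hx]

lemma kf_four (z θ a b c e : ℝ) (hz : z^2=5) (z1 : 2.2 < z) (z2 : z < 2.3) (hθ : θ = (z-1)/2)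
    (h0 : a+b+c+e=0) (hn : a^2+b^2+c^2+e^2=1)
    (na : a ≠ 0) (nb : b ≠ 0) (nc : c ≠ 0) (ne : e ≠ 0)
    (ab : 0 < a*b → a = b ∧ 4*a^2=θ) (ac : 0 < a*c → a = c ∧ 4*a^2=θ)
    (ae : 0 < a*e → a = e ∧ 4*a^2=θ) (bc : 0 < b*c → b = c ∧ 4*b^2=θ)
    (be : 0 < b*e → b = e ∧ 4*b^2=θ) (ce : 0 < c*e → c = e ∧ 4*c^2=θ) : False := by
  have P : ∀ x y : ℝ, (0 < x*y → x = y ∧ 4*x^2=θ) → 0 < x → 0 < y → x = y ∧ 4*x^2=θ :=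
    fun x y h hx hy => h (mul_pos hx hy)
  have N : ∀ x y : ℝ, (0 < x*y → x = y ∧ 4*x^2=θ) → x < 0 → y < 0 → x = y ∧ 4*x^2=θ :=
    fun x y h hx hy => h (mul_pos_of_neg_of_neg hx hy)
  have Pab := P _ _ ab
  have Pac := P _ _ ac
  have Pae := P _ _ ae
  have Pbc := P _ _ bc
  have Pbe := P _ _ be
  have Pce := P _ _ ce
  have Nab := N _ _ ab
  have Nac := N _ _ ac
  have Nae := N _ _ ae
  have Nbc := N _ _ bc
  have Nbe := N _ _ be
  have Nce := N _ _ ce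
  clear P N ab ac ae bc be ce
  rcases lt_or_gt_of_ne na with ha | ha <;> rcases lt_or_gt_of_ne nb with hb | hb <;>
  rcases lt_or_gt_of_ne nc with hc | hc <;> rcases lt_or_gt_of_ne ne with he | he <;>
  simp only [ha, hb, hc, he, ha.not_gt, hb.not_gt, hc.not_gt, he.not_gt, forall_true_left,
    false_imp_iff, true_imp_iff, imp_true_iff] at Pab Pac Pae Pbc Pbe Pce Nab Nac Nae Nbc Nbe Nce <;>
  first
  | linarith
  | grind

lemma kf_rank2 (z : ℝ) (hz : z^2=5) (z1 : 2.2 < z) (z2 : z < 2.3)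
    (A : ZMod 2 × ZMod 2 → ZMod 2 × ZMod 2 → ℝ)
    (v : ZMod 2 × ZMod 2 → ℝ) (hv : ∑ g, v g = 0) (hn : ∑ g, v g ^ 2 = 1)
    (hA : ∀ g k, A g k = -(if g = k then (1:ℝ) else 0) + 2 * (v g * v k) + (3-z)/4)
    (hd : ∀ g y, ∑ k, A g k ^ 2 * A y k = A g y ^ 2 - (z-2)) : False := by
  rw [kf_sum] at hv hn
  have hS : ∀ g, ∑ k, A g k ^ 2 = 3 - z := by
    intro g
    rw [kf_sum, hA g (0,0), hA g (0,1), hA g (1,0), hA g (1,1)]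
    revert g
    refine kf_all _ ?_ ?_ ?_ ?_ <;> simp only [Prod.mk.injEq, zero_ne_one, one_ne_zero, and_true, and_false, true_and, false_and, if_true, if_false]
    · linear_combination 4*v (0,0)^2*hn + v (0,0)*(3-z)*hv + hz/4
    · linear_combination 4*v (0,1)^2*hn + v (0,1)*(3-z)*hv + hz/4
    · linear_combination 4*v (1,0)^2*hn + v (1,0)*(3-z)*hv + hz/4
    · linear_combination 4*v (1,1)^2*hn + v (1,1)*(3-z)*hv + hz/4
  have key : ∀ g y, A g y ^ 2 = v y * (∑ k, A g k ^ 2 * v k) + (3-z)/4 := by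
    intro g y
    have h := hd g y
    have h2 := hS g
    rw [kf_sum] at h h2 ⊢
    rw [hA y (0,0), hA y (0,1), hA y (1,0), hA y (1,1)] at h
    revert h
    revert y
    refine kf_all _ ?_ ?_ ?_ ?_ <;> intro h <;>
    simp only [Prod.mk.injEq, zero_ne_one, one_ne_zero, and_true, and_false, true_and, false_and, if_true, if_false] at h <;> linear_combination -h/2 + (3-z)/8*h2 + hz/8
  obtain ⟨θ, hθ⟩ : ∃ θ, θ = (z-1)/2 := ⟨_, rfl⟩
  have F : ∀ x y, x ≠ y → 4*v x^3*v y^2+(4*v x^2-4*v x^4-3*θ/4)*v y = θ*v x/4 := by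
    intro x y hxy
    have h1 := key x x
    have h2 := key x y
    rw [hA] at h1 h2
    rw [if_pos rfl] at h1
    rw [if_neg hxy] at h2
    generalize ∑ k, A x k ^ 2 * v k = W at *
    subst hθ
    linear_combination v x * h2 - v y * h1 + (v y - v x)/16 * hz
  have hθ0 : 0 < θ := by linarith
  have nz : ∀ x, v x ≠ 0 := by
    intro x hx
    have hy : ∀ y, v y = 0 := by
      intro y
      by_cases hxy : x = y
      · rw [← hxy, hx]
      · have := F x y hxy
        rw [hx] at this
        have h3 : θ * v y = 0 := by linarith
        exact (mul_eq_zero.1 h3).resolve_left hθ0.ne'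
    rw [hy, hy, hy, hy] at hn
    norm_num at hn
  have Q : ∀ g x y, g ≠ x → g ≠ y → x ≠ y → 0 < v x * v y → v x = v y ∧ 4 * v x ^ 2 = θ :=
    fun g x y h1 h2 h3 h => kf_pair θ (v g) (v x) (v y) hθ0 (nz g) (F g x h1) (F g y h2) (F x y h3) h
  exact kf_four z θ _ _ _ _ hz z1 z2 hθ hv hn (nz _) (nz _) (nz _) (nz _)
    (Q (1,1) _ _ (by decide) (by decide) (by decide)) (Q (1,1) _ _ (by decide) (by decide) (by decide))
    (Q (0,1) _ _ (by decide) (by decide) (by decide)) (Q (1,1) _ _ (by decide) (by decide) (by decide))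
    (Q (0,0) _ _ (by decide) (by decide) (by decide)) (Q (0,0) _ _ (by decide) (by decide) (by decide))

lemma kf_rank3 (z : ℝ) (hz : z^2=5) (z1 : 2.2 < z) (z2 : z < 2.3)
    (A : ZMod 2 × ZMod 2 → ZMod 2 × ZMod 2 → ℝ)
    (hA : ∀ g k, A g k = -(if g = k then (1:ℝ) else 0) + (3-z)/4)
    (hd : ∀ g y, ∑ k, A g k ^ 2 * A y k = A g y ^ 2 - (z-2)) : False := by
  have h := hd (0,0) (0,1)
  simp only [kf_sum, hA, Prod.mk.injEq, zero_ne_one, one_ne_zero, and_true, and_false, true_and, false_and, if_true, if_false] at h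
  have h3 : z^3 = 5*z := by rw [pow_succ, hz]
  ring_nf at h
  rw [hz, h3] at h
  linarith

lemma kf_d : dR (ZMod 2 × ZMod 2) = 2 + Real.sqrt 5 := by
  have h : Real.sqrt 20 = 2 * Real.sqrt 5 := by
    rw [show (20:ℝ) = 2^2*5 by norm_num, Real.sqrt_mul (by norm_num), Real.sqrt_sq (by norm_num)]
  have h2 : Fintype.card (ZMod 2 × ZMod 2) = 4 := rfl
  rw [dR, h2]
  norm_num
  rw [h]
  ring

/-- For `G = ℤ/2 × ℤ/2` (where `d = 2+√5`), there is exactly one function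
`x : G×G → ℝ` with `x_{g,h} = x_{g+h,h}` satisfying (Deg1)–(Deg3), namely
`x_{g,0} = 1 − 1/(d−1) = (5−√5)/4` and `x_{g,h} = −1/(d−1) = (1−√5)/4` for `h ≠ 0`. -/
theorem degSol_klein_four_unique :
    (5 - Real.sqrt 5) / 4 = 1 - 1 / (dR (ZMod 2 × ZMod 2) - 1) ∧
    (1 - Real.sqrt 5) / 4 = -(1 / (dR (ZMod 2 × ZMod 2) - 1)) ∧
    ∀ x : ZMod 2 × ZMod 2 → ZMod 2 × ZMod 2 → ℝ,
      ((∀ g h : ZMod 2 × ZMod 2, x g h = x (g + h) h) ∧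
       (∀ g : ZMod 2 × ZMod 2, ∑ l : ZMod 2 × ZMod 2, x g l = -1 / dR (ZMod 2 × ZMod 2)) ∧
       (∀ g g' : ZMod 2 × ZMod 2,
          ∑ l : ZMod 2 × ZMod 2, x g (l - g) * x g' (l - g')
            = (if g = g' then (1 : ℝ) else 0) - 1 / dR (ZMod 2 × ZMod 2)) ∧
       (∀ g h : ZMod 2 × ZMod 2,
          ∑ l : ZMod 2 × ZMod 2, (x g l) ^ 2 * x (g - h) (l + h)
            = (x g h) ^ 2 - 1 / dR (ZMod 2 × ZMod 2)))
      ↔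
      ((∀ g : ZMod 2 × ZMod 2, x g 0 = (5 - Real.sqrt 5) / 4) ∧
       (∀ g h : ZMod 2 × ZMod 2, h ≠ 0 → x g h = (1 - Real.sqrt 5) / 4)) := by
  have hz : Real.sqrt 5 ^ 2 = 5 := Real.sq_sqrt (by norm_num)
  have z0 : 0 ≤ Real.sqrt 5 := Real.sqrt_nonneg 5
  rw [kf_d]
  generalize Real.sqrt 5 = z at *
  have z1 : 2.2 < z := by nlinarith
  have z2 : z < 2.3 := by nlinarith
  have hi : 1 / (2 + z) = z - 2 := by
    rw [div_eq_iff (by linarith)]; linarith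
  have hi' : -1 / (2 + z) = 2 - z := by
    rw [div_eq_iff (by linarith)]; linarith
  have hj : 1 / (2 + z - 1) = (z - 1) / 4 := by
    rw [div_eq_iff (by linarith)]; linarith
  rw [hi, hi', hj]
  refine ⟨by ring, by ring, fun x => ⟨?_, ?_⟩⟩
  · rintro ⟨h0, h1, h2, h3⟩
    have hd : ∀ g y, ∑ k, x g (k-g) ^ 2 * x y (k-y) = x g (y-g) ^ 2 - (z-2) := by
      intro g y
      rw [← h3 g (y-g), ← Equiv.sum_comp (Equiv.subRight g)]
      refine Finset.sum_congr rfl fun k _ => ?_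
      have e1 : ∀ g y : ZMod 2 × ZMod 2, g - (y - g) = y := by decide
      have e2 : ∀ g y k : ZMod 2 × ZMod 2, k - g - y = k + (y - g) := by decide
      have e3 : ∀ g k : ZMod 2 × ZMod 2, k - g - g = k := by decide
      rw [e1, Equiv.subRight_apply, e3, e2]
    have hs : ∀ g k, x g (k-g) = x k (g-k) := by
      intro g k
      have e1 : ∀ g k : ZMod 2 × ZMod 2, g - k = k - g := by decide
      rw [h0 g (k-g), e1 g k, add_sub_cancel]
    have hr : ∀ g, ∑ k, x g (k-g) = 2 - z := by
      intro g
      rw [← h1 g]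
      exact Equiv.sum_comp (Equiv.subRight g) (fun l => x g l)
    have hA : ∀ g k, x g (k-g) = (if g = k then (1:ℝ) else 0) - (z-1)/4 := by
      rcases kf_struct z (fun g k => x g (k-g)) hs hr h2 with h | h | ⟨v, hv, hn, h⟩ | ⟨v, hv, hn, h⟩
      · exact h
      · exact (kf_rank3 z hz z1 z2 _ h hd).elim
      · exact (kf_rank1 z z1 z2 _ v hv hn h hd).elim
      · exact (kf_rank2 z hz z1 z2 _ v hv hn h hd).elim
    constructor
    · intro g
      have := hA g g
      rw [sub_self, if_pos rfl] at this
      linarith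
    · intro g h hh
      have := hA g (h+g)
      rw [add_sub_cancel_right, if_neg (by simpa using hh)] at this
      linarith
  · rintro ⟨h0, h1⟩
    have hx : ∀ g h, x g h = (if h = 0 then (1:ℝ) else 0) - (z-1)/4 := by
      intro g h
      split_ifs with hh
      · rw [hh, h0]; ring
      · rw [h1 g h hh]; ring
    have h3 : z^3 = 5*z := by rw [pow_succ, hz]
    refine ⟨fun g h => by rw [hx, hx], ?_, ?_, ?_⟩
    · intro g
      simp only [hx, kf_sum, Prod.mk_eq_zero, Prod.mk.injEq, zero_ne_one, one_ne_zero, and_true, and_false, true_and, false_and, if_true, if_false]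
      ring
    · simp only [hx, kf_sum, sub_eq_zero]
      refine kf_all _ ?_ ?_ ?_ ?_ <;> refine kf_all _ ?_ ?_ ?_ ?_ <;>
      simp only [Prod.mk.injEq, zero_ne_one, one_ne_zero, and_true, and_false, true_and, false_and, if_true, if_false] <;> linear_combination hz/4
    · simp only [hx, kf_sum]
      have e : ∀ a b : ZMod 2 × ZMod 2, a + b = 0 ↔ b = a := by decide
      simp only [e]
      intro g
      refine kf_all _ ?_ ?_ ?_ ?_ <;>
      simp only [Prod.mk_eq_zero, Prod.mk.injEq, zero_ne_one, one_ne_zero, and_true, and_false, true_and, false_and, if_true, if_false] <;> ring_nf <;> rw [hz, h3] <;> ring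
end
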